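/- Let r, n₁, n₂ be positive integers and let f = (f₁,f₂) ∈ 𝒪(ℂ²,0,0) be given by f₁(x₁,x₂) = x₁^{n₁}[x₁^{rn₁}·O(1) + x₂^{n₂}·O(1)] and f₂(x₁,x₂) = x₂^{n₂}[x₁^{n₁}·O(1) + x₂^{rn₂}·O(1)]. If 0 is an isolated zero of f, then π_f(0) ≥ 2n₁n₂ + 2rn₁n₂. -/

import Mathlib

open Metric Set Filter Topology Polynomial Asymptotics
open scoped Classical

noncomputable section

namespace ZhangPaper

/-- `ℂⁿ`. -/
abbrev Cn (n : ℕ) := Fin n → ℂ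

variable {n : ℕ}

/-- A germ in `𝒪(ℂⁿ,0,0)`: holomorphic near `0` and fixing the origin. -/
def IsGerm (f : Cn n → Cn n) : Prop := AnalyticAt ℂ f 0 ∧ f 0 = 0

/-- `q` is a regular value of `h` on `s`. -/
def IsRegularValueOn (h : Cn n → Cn n) (s : Set (Cn n)) (q : Cn n) : Prop :=
  ∀ x ∈ s, h x = q → Function.Bijective (fderiv ℂ h x)

/-- `m` is the zero order (multiplicity) of `h` at the isolated zero `p`:
the number of solutions of `h x = q` near `p`, for any regular value `q`
with `‖q‖` sufficiently small. -/
def HasZeroOrder (h : Cn n → Cn n) (p : Cn n) (m : ℕ) : Prop :=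
  ∃ r > 0, AnalyticOnNhd ℂ h (closedBall p r) ∧ h p = 0 ∧
    (∀ x ∈ closedBall p r, h x = 0 → x = p) ∧
    (∀ ε > 0, ∃ q : Cn n, ‖q‖ < ε ∧ IsRegularValueOn h (ball p r) q) ∧
    ∃ δ > 0, ∀ q : Cn n, ‖q‖ < δ → IsRegularValueOn h (ball p r) q →
      {x ∈ ball p r | h x = q}.ncard = m

/-- The zero order `π_h(p)` of `h` at `p`. -/
def zeroOrder (h : Cn n → Cn n) (p : Cn n) : ℕ := sInf {m | HasZeroOrder h p m}

/-- The fixed point index `μ_g(p)` of `g` at `p`. -/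
def fixedPointIndex (g : Cn n → Cn n) (p : Cn n) : ℕ :=
  zeroOrder (fun x => x - g x) p

/-- The local Dold index `P_M(f,0)`. -/
def doldIndex (f : Cn n → Cn n) (M : ℕ) : ℤ :=
  ∑ τ ∈ M.primeFactors.powerset,
    (-1 : ℤ) ^ τ.card * (fixedPointIndex (f^[M / (∏ p ∈ τ, p)]) 0 : ℤ)

/-- `x` is a periodic point of exact period `M` for `g`. -/
def ExactPeriodicPt (g : Cn n → Cn n) (M : ℕ) (x : Cn n) : Prop :=
  g^[M] x = x ∧ ∀ j, 0 < j → j < M → g^[j] x ≠ x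

/-- `g` has at least `m` distinct periodic orbits of period `M` inside `B`. -/
def AtLeastOrbits (g : Cn n → Cn n) (M m : ℕ) (B : Set (Cn n)) : Prop :=
  ∃ p : Fin m → Cn n,
    (∀ i, ExactPeriodicPt g M (p i) ∧ ∀ j < M, g^[j] (p i) ∈ B) ∧
    ∀ i j : Fin m, i ≠ j → ∀ l < M, g^[l] (p i) ≠ p j

/-- `g` has exactly `m` distinct periodic orbits of period `M` inside `B`. -/
def ExactlyOrbits (g : Cn n → Cn n) (M m : ℕ) (B : Set (Cn n)) : Prop :=
  AtLeastOrbits g M m B ∧ ¬ AtLeastOrbits g M (m + 1) B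

/-- The number `𝒪_M(f,0)` of periodic orbits of period `M` of `f` hidden at the
fixed point `0`: the largest `m` such that there is a ball `B` centered at `0` in which
`0` is the only fixed point of `f^M`, and a sequence of holomorphic maps fixing `0`
converging to `f` uniformly on `B`, each having `m` distinct periodic orbits of
period `M` in `B`. -/
def hiddenOrbits (f : Cn n → Cn n) (M : ℕ) : ℕ :=
  sSup {m | ∃ r > 0,
    (∀ x ∈ closedBall (0 : Cn n) r, f^[M] x = x → x = 0) ∧
    ∃ fk : ℕ → Cn n → Cn n,
      (∀ k, AnalyticOnNhd ℂ (fk k) (ball (0 : Cn n) r) ∧ fk k 0 = 0) ∧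
      TendstoUniformlyOn fk f atTop (ball (0 : Cn n) r) ∧
      ∀ k, AtLeastOrbits (fk k) M m (ball (0 : Cn n) r)}

/-- `0` is an isolated fixed point of `g`. -/
def IsolatedFixedPtAt0 (g : Cn n → Cn n) : Prop :=
  g 0 = 0 ∧ ∀ᶠ x in 𝓝[≠] (0 : Cn n), g x ≠ x

/-- `0` is an isolated zero of `h`. -/
def IsolatedZeroAt0 (h : Cn n → Cn n) : Prop :=
  h 0 = 0 ∧ ∀ᶠ x in 𝓝[≠] (0 : Cn n), h x ≠ 0

/-- `p` is a simple fixed point of `g`: `Dg(p)` has no eigenvalue `1`. -/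
def SimpleFixedPt (g : Cn n → Cn n) (p : Cn n) : Prop :=
  g p = p ∧ ¬ Module.End.HasEigenvalue ((fderiv ℂ g p).toLinearMap) 1

/-- The global fixed point index `L(g)` of `g` over `U`: the sum of the fixed point
indices at all fixed points of `g` in `U`. -/
def globalIndex (g : Cn n → Cn n) (U : Set (Cn n)) : ℤ :=
  ∑ᶠ p ∈ {x ∈ U | g x = x}, (fixedPointIndex g p : ℤ)

/-- The global Dold index `P_M(f)` over `U`. -/
def globalDold (f : Cn n → Cn n) (M : ℕ) (U : Set (Cn n)) : ℤ :=
  ∑ τ ∈ M.primeFactors.powerset,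
    (-1 : ℤ) ^ τ.card * globalIndex (f^[M / (∏ p ∈ τ, p)]) U

open MeasureTheory
open scoped Matrix

/-!
The zero order is the degree on a small ball, that is, the number of preimages of a nearby regular
value. This number is locally constant: for a bump function `θ`, the integral of
`θ (h x - q) * det (Dh x)` does not depend on `q` because its derivative in `q` is exact, and for
small `θ` it counts preimages, since the real determinant of an invertible complex linear map is
positive. Applied to `(t, x) ↦ (t, H t x)`, the same invariance shows that the degree is constant in
analytic families.

Two rules follow by perturbation. Replacing a component `u g` by `(u - q) (g - s)` splits the zero
set, so the degree is additive in the factors of each component. Replacing `M G` by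
`(M + c) (G - q)` keeps every zero of `G - q` nondegenerate, so the degree of `M G` is at least that
of `G`. The first rule gives degree `p₁ p₂` for `(x₁ ^ p₁, x₂ ^ p₂)` and splits the factored system
into four systems; the second bounds each of these below by a system of pure powers.
-/

section DegreeIntegral

variable {E : Type*} [NormedAddCommGroup E] [NormedSpace ℝ E]

theorem indicator_eq_zero_of_notMem_subset {α M : Type*} [Zero M] {g : α → M} {U K : Set α}
    (hzero : ∀ x ∈ U, x ∉ K → g x = 0) {x : α} (hx : x ∉ K) : U.indicator g x = 0 :=
  (em (x ∈ U)).elim (fun h => (indicator_of_mem h g).trans (hzero x h hx))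
    (indicator_of_notMem · g)

theorem contDiff_indicator_of_eq_zero {F : Type*} [NormedAddCommGroup F] [NormedSpace ℝ F]
    {g : E → F} {U K : Set E} (hU : IsOpen U) (hK : IsClosed K) (hKU : K ⊆ U)
    (hg : ∀ x ∈ U, ContDiffAt ℝ 1 g x) (hzero : ∀ x ∈ U, x ∉ K → g x = 0) :
    ContDiff ℝ 1 (U.indicator g) := by
  refine contDiff_iff_contDiffAt.2 fun x => ?_
  by_cases hx : x ∈ U
  · exact (hg x hx).congr_of_eventuallyEq (eqOn_indicator.eventuallyEq_of_mem (hU.mem_nhds hx))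
  · refine (contDiffAt_const (c := (0 : F))).congr_of_eventuallyEq ?_
    filter_upwards [hK.isOpen_compl.mem_nhds fun h => hx (hKU h)] with y hy
    exact indicator_eq_zero_of_notMem_subset hzero hy

theorem integral_fderiv_apply_eq_zero [FiniteDimensional ℝ E] [MeasurableSpace E] [BorelSpace E]
    (μ : Measure E) [μ.IsAddHaarMeasure] {g : E → ℝ} (hg : ContDiff ℝ 1 g)
    (hc : HasCompactSupport g) (v : E) : ∫ x, fderiv ℝ g x v ∂μ = 0 := by
  have hint : Integrable (fun x => fderiv ℝ g x v) μ :=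
    ((hg.continuous_fderiv one_ne_zero).clm_apply continuous_const).integrable_of_hasCompactSupport
      (hc.fderiv_apply ℝ v)
  have h := integral_bilinear_fderiv_right_eq_neg_left_of_integrable (μ := μ)
    (f := fun _ => (1 : ℝ)) (g := g) (v := v) (B := ContinuousLinearMap.lsmul ℝ ℝ)
    (by simp) (by simpa using hint)
    (by simpa using hg.continuous.integrable_of_hasCompactSupport hc)
    (by simp) (fun x _ => hg.differentiable one_ne_zero x)
  simpa using h

theorem integrableOn_fderiv_apply_and_setIntegral_eq_zero [FiniteDimensional ℝ E]
    [MeasurableSpace E] [BorelSpace E] (μ : Measure E) [μ.IsAddHaarMeasure]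
    {g : E → ℝ} {U K : Set E} (hU : IsOpen U) (hK : IsCompact K) (hKU : K ⊆ U)
    (hg : ∀ x ∈ U, ContDiffAt ℝ 1 g x) (hzero : ∀ x ∈ U, x ∉ K → g x = 0) (v : E) :
    IntegrableOn (fun x => fderiv ℝ g x v) U μ ∧ ∫ x in U, fderiv ℝ g x v ∂μ = 0 := by
  let G := U.indicator g
  have hG : ContDiff ℝ 1 G := contDiff_indicator_of_eq_zero hU hK.isClosed hKU hg hzero
  have hGoff : ∀ x ∉ K, G x = 0 := fun x => indicator_eq_zero_of_notMem_subset hzero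
  have hGc : HasCompactSupport G := HasCompactSupport.intro hK hGoff
  have hGsupp : tsupport G ⊆ U :=
    (closure_minimal (fun x hx => not_imp_comm.1 (hGoff x) hx) hK.isClosed).trans hKU
  have hGU : EqOn (fun x => fderiv ℝ G x v) (fun x => fderiv ℝ g x v) U := fun x hx => by
    have : G =ᶠ[𝓝 x] g := eqOn_indicator.eventuallyEq_of_mem (hU.mem_nhds hx)
    simp only [this.fderiv_eq]
  have hGout : ∀ x ∉ U, fderiv ℝ G x v = 0 := fun x hx => by
    simp [fderiv_of_notMem_tsupport (𝕜 := ℝ) (fun h => hx (hGsupp h))]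
  constructor
  · refine (integrableOn_congr_fun hGU hU.measurableSet).1 (Integrable.integrableOn ?_)
    exact ((hG.continuous_fderiv one_ne_zero).clm_apply
      continuous_const).integrable_of_hasCompactSupport (hGc.fderiv_apply ℝ v)
  · rw [← setIntegral_congr_fun hU.measurableSet hGU,
      setIntegral_eq_integral_of_forall_compl_eq_zero hGout]
    exact integral_fderiv_apply_eq_zero μ hG hGc v

theorem cons_removeNth {α : Type*} {N : ℕ} (a : α) (v : Fin (N + 1) → α) (i : Fin (N + 1)) :
    i.succ.removeNth (Fin.cons a v : Fin (N + 2) → α) = Fin.cons a (i.removeNth v) := by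
  ext j
  cases j using Fin.cases <;> simp [Fin.removeNth]

-- The alternating form `l ∧ vol` has degree larger than the dimension, so it vanishes.
theorem alternatizeUncurryFin_smulRight_curryLeft [FiniteDimensional ℝ E] {N : ℕ}
    (hN : Module.finrank ℝ E = N + 1) (vol : E [⋀^Fin (N + 1)]→L[ℝ] ℝ) (l : E →L[ℝ] ℝ) (a : E) :
    ContinuousAlternatingMap.alternatizeUncurryFin (l.smulRight (vol.curryLeft a)) =
      l a • vol := by
  ext v
  have hdep : ¬ LinearIndependent ℝ (Fin.cons a v : Fin (N + 2) → E) := fun h => by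
    have := h.fintype_card_le_finrank
    rw [Fintype.card_fin, hN] at this
    lia
  have h : ContinuousAlternatingMap.alternatizeUncurryFin (l.smulRight vol)
      (Fin.cons a v : Fin (N + 2) → E) = 0 :=
    (ContinuousAlternatingMap.alternatizeUncurryFin
      (l.smulRight vol)).toAlternatingMap.map_linearDependent _ hdep
  simp only [ContinuousAlternatingMap.alternatizeUncurryFin_apply, Fin.sum_univ_succ (n := N + 1),
    cons_removeNth, Fin.val_zero, pow_zero, one_smul, Fin.removeNth_zero, Fin.tail_cons,
    Fin.cons_zero, Fin.cons_succ, Fin.val_succ, ContinuousLinearMap.smulRight_apply,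
    ContinuousAlternatingMap.smul_apply, smul_eq_mul, pow_succ, mul_neg_one, neg_smul,
    Finset.sum_neg_distrib] at h ⊢
  exact (eq_of_sub_eq_zero ((sub_eq_add_neg _ _).trans h)).symm

/-- The determinant with respect to the real basis `e`, as a continuous alternating form. It is the
constant volume form whose pullback under a map `h` is `det (Dh)` times itself. -/
def volumeForm {N : ℕ} [FiniteDimensional ℝ E] (e : Module.Basis (Fin N) ℝ E) :
    E [⋀^Fin N]→L[ℝ] ℝ :=
  { e.det with
    cont := by
      have (i : Fin N) : Continuous (e.coord i) := (e.coord i).continuous_of_finiteDimensional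
      refine Continuous.matrix_det (continuous_matrix fun i j => ?_)
      exact (this i).comp (continuous_apply j) }

theorem volumeForm_self {N : ℕ} [FiniteDimensional ℝ E] (e : Module.Basis (Fin N) ℝ E) :
    volumeForm e e = 1 :=
  e.det_self

theorem volumeForm_comp [FiniteDimensional ℝ E] {N : ℕ} (e : Module.Basis (Fin N) ℝ E)
    (A : E →L[ℝ] E) (v : Fin N → E) : volumeForm e (A ∘ v) = A.det * volumeForm e v :=
  e.det_comp (A : E →ₗ[ℝ] E) v

theorem extDeriv_smul_curryLeft [FiniteDimensional ℝ E] {N : ℕ}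
    (hN : Module.finrank ℝ E = N + 1) (vol : E [⋀^Fin (N + 1)]→L[ℝ] ℝ) (a : E)
    {θ : E → ℝ} {y : E} (hθ : DifferentiableAt ℝ θ y) :
    extDeriv (fun y => θ y • vol.curryLeft a) y = fderiv ℝ θ y a • vol := by
  have h : HasFDerivAt (fun y => θ y • vol.curryLeft a)
      ((fderiv ℝ θ y).smulRight (vol.curryLeft a)) y :=
    hθ.hasFDerivAt.smul_const (F := E [⋀^Fin N]→L[ℝ] ℝ) (vol.curryLeft a)
  rw [extDeriv, h.fderiv, alternatizeUncurryFin_smulRight_curryLeft hN]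

theorem sum_fderiv_pullback_apply [FiniteDimensional ℝ E] {N : ℕ}
    (hN : Module.finrank ℝ E = N + 1) (vol : E [⋀^Fin (N + 1)]→L[ℝ] ℝ) (a : E)
    {θ : E → ℝ} (hθ : Differentiable ℝ θ) {h : E → E} {x : E} (hh : ContDiffAt ℝ 2 h x)
    (v : Fin (N + 1) → E) :
    ∑ i : Fin (N + 1), (-1) ^ i.val • fderiv ℝ (fun x => θ (h x) •
      vol.curryLeft a (fderiv ℝ h x ∘ i.removeNth v)) x (v i) =
      fderiv ℝ θ (h x) a * vol (fderiv ℝ h x ∘ v) := by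
  have hω : Differentiable ℝ fun y => θ y • vol.curryLeft a := hθ.smul_const _
  have hpull := extDeriv_pullback (hω (h x)) hh (by simp)
  rw [extDeriv_smul_curryLeft hN vol a (hθ _)] at hpull
  have hdiff : DifferentiableAt ℝ (fun x => (θ (h x) • vol.curryLeft a).compContinuousLinearMap
      (fderiv ℝ h x)) x :=
    DifferentiableAt.continuousAlternatingMapCompContinuousLinearMap
      ((hω (h x)).comp x (hh.differentiableAt two_ne_zero))
      ((hh.fderiv_right (m := 1) le_rfl).differentiableAt one_ne_zero)
  exact (extDeriv_apply hdiff v).symm.trans congr($hpull v)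

theorem continuousOn_closure_comp_mul_det {U : Set E} {h : E → E} {θ : E → ℝ}
    (hh : ∀ x ∈ closure U, ContDiffAt ℝ 2 h x) (hθ : Continuous θ) :
    ContinuousOn (fun x => θ (h x) * (fderiv ℝ h x).det) (closure U) := fun x hx =>
  ((hθ.continuousAt.comp (hh x hx).continuousAt).mul
    (ContinuousLinearMap.continuous_det.continuousAt.comp
      ((hh x hx).continuousAt_fderiv two_ne_zero))).continuousWithinAt

variable [FiniteDimensional ℝ E] [MeasurableSpace E] [BorelSpace E]
  (μ : Measure E) [μ.IsAddHaarMeasure] {U : Set E} {h : E → E} {θ : E → ℝ}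

theorem setIntegral_fderiv_comp_mul_det_eq_zero
    (hU : IsOpen U) (hUb : Bornology.IsBounded U)
    (hh : ∀ x ∈ closure U, ContDiffAt ℝ 2 h x) (hθ : ContDiff ℝ 1 θ)
    (hs : ∀ x ∈ frontier U, h x ∉ tsupport θ) (a : E) :
    ∫ x in U, fderiv ℝ θ (h x) a * (fderiv ℝ h x).det ∂μ = 0 := by
  rcases h0 : Module.finrank ℝ E with _ | N
  · have : Subsingleton E := Module.finrank_zero_iff.1 h0
    simp [Subsingleton.elim a 0]
  let e := Module.finBasisOfFinrankEq ℝ E h0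
  let η : Fin (N + 1) → E → ℝ := fun i x =>
    θ (h x) • (volumeForm e).curryLeft a (fderiv ℝ h x ∘ i.removeNth e)
  have hdiv : ∀ x ∈ U, ∑ i : Fin (N + 1), (-1) ^ i.val * fderiv ℝ (η i) x (e i) =
      fderiv ℝ θ (h x) a * (fderiv ℝ h x).det := fun x hx => by
    simpa only [volumeForm_comp, volumeForm_self, mul_one, zsmul_eq_mul, Int.cast_pow,
      Int.cast_neg, Int.cast_one] using sum_fderiv_pullback_apply h0 (volumeForm e) a
        (hθ.differentiable one_ne_zero) (hh x (subset_closure hx)) e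
  let K := closure U ∩ h ⁻¹' tsupport θ
  have hK : IsCompact K := hUb.isCompact_closure.of_isClosed_subset
    (ContinuousOn.preimage_isClosed_of_isClosed
      (fun x hx => (hh x hx).continuousAt.continuousWithinAt) isClosed_closure
      (isClosed_tsupport θ)) inter_subset_left
  have hKU : K ⊆ U := fun x ⟨hx, hθx⟩ => by_contra fun hxU =>
    hs x ⟨hx, by rwa [hU.interior_eq]⟩ hθx
  have hη : ∀ i, ∀ x ∈ U, ContDiffAt ℝ 1 (η i) x := fun i x hx => by
    have hx' := hh x (subset_closure hx)
    refine (hθ.contDiffAt.comp x (hx'.of_le one_le_two)).smul ?_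
    refine ((volumeForm e).curryLeft a).toContinuousMultilinearMap.contDiff.contDiffAt.comp x ?_
    exact contDiffAt_pi.2 fun j => (hx'.fderiv_right le_rfl).clm_apply contDiffAt_const
  have hη0 : ∀ i, ∀ x ∈ U, x ∉ K → η i x = 0 := fun i x hxU hxK => by
    have : h x ∉ tsupport θ := fun h => hxK ⟨subset_closure hxU, h⟩
    simp only [η, image_eq_zero_of_notMem_tsupport this, zero_smul]
  have hI := fun i =>
    integrableOn_fderiv_apply_and_setIntegral_eq_zero μ hU hK hKU (hη i) (hη0 i) (e i)
  rw [← setIntegral_congr_fun hU.measurableSet hdiv,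
    integral_finsetSum _ fun i _ => (hI i).1.const_mul _]
  simp only [integral_const_mul, (hI _).2, mul_zero, Finset.sum_const_zero]

theorem integrableOn_comp_mul_det (hUb : Bornology.IsBounded U)
    (hh : ∀ x ∈ closure U, ContDiffAt ℝ 2 h x) (hθ : Continuous θ) :
    IntegrableOn (fun x => θ (h x) * (fderiv ℝ h x).det) U μ :=
  ((continuousOn_closure_comp_mul_det hh hθ).integrableOn_compact
    hUb.isCompact_closure).mono_set subset_closure

theorem hasDerivAt_setIntegral_comp_sub_smul_mul_det (hUb : Bornology.IsBounded U)
    (hh : ∀ x ∈ closure U, ContDiffAt ℝ 2 h x) (hθ : ContDiff ℝ 1 θ) (hθc : HasCompactSupport θ)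
    (a : E) (t : ℝ) :
    HasDerivAt (fun t : ℝ => ∫ x in U, θ (h x - t • a) * (fderiv ℝ h x).det ∂μ)
      (-∫ x in U, fderiv ℝ θ (h x - t • a) a * (fderiv ℝ h x).det ∂μ) t := by
  have hθ' : Continuous fun y => fderiv ℝ θ y a :=
    (hθ.continuous_fderiv one_ne_zero).clm_apply continuous_const
  obtain ⟨C, hC⟩ := hθ'.bounded_above_of_compact_support (hθc.fderiv_apply ℝ a)
  have hint : ∀ {ψ : E → ℝ}, Continuous ψ → ∀ t : ℝ,
      IntegrableOn (fun x => ψ (h x - t • a) * (fderiv ℝ h x).det) U μ := fun hψ t =>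
    integrableOn_comp_mul_det (θ := fun y => _) μ hUb hh (hψ.comp (continuous_sub_right (t • a)))
  rw [← integral_neg]
  refine (hasDerivAt_integral_of_dominated_loc_of_deriv_le (s := univ)
    (bound := fun x => C * |(fderiv ℝ h x).det|)
    (F' := fun t x => -(fderiv ℝ θ (h x - t • a) a * (fderiv ℝ h x).det)) Filter.univ_mem
    (.of_forall fun t => (hint hθ.continuous t).aestronglyMeasurable) (hint hθ.continuous t)
    (hint hθ' t).neg.aestronglyMeasurable (.of_forall fun x t _ => ?_) ?_
    (.of_forall fun x t _ => ?_)).2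
  · rw [norm_neg, norm_mul, Real.norm_eq_abs (ContinuousLinearMap.det _)]
    gcongr
    exact hC _
  · have := integrableOn_comp_mul_det (θ := fun _ => 1) μ hUb hh continuous_const
    simpa using this.abs.const_mul C
  · have hline : HasDerivAt (fun t : ℝ => h x - t • a) (-a) t := by
      simpa using ((hasDerivAt_id t).smul_const a).const_sub (h x)
    simpa using ((hθ.differentiable one_ne_zero _).hasFDerivAt.comp_hasDerivAt t hline).mul_const
      (fderiv ℝ h x).det

theorem setIntegral_comp_sub_mul_det (hU : IsOpen U) (hUb : Bornology.IsBounded U)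
    (hh : ∀ x ∈ closure U, ContDiffAt ℝ 2 h x) (hθ : ContDiff ℝ 1 θ) (hθc : HasCompactSupport θ)
    (a : E) (hs : ∀ t ∈ Icc (0 : ℝ) 1, ∀ x ∈ frontier U, h x - t • a ∉ tsupport θ) :
    ∫ x in U, θ (h x - a) * (fderiv ℝ h x).det ∂μ = ∫ x in U, θ (h x) * (fderiv ℝ h x).det ∂μ := by
  let I : ℝ → ℝ := fun t => ∫ x in U, θ (h x - t • a) * (fderiv ℝ h x).det ∂μ
  have hI : ∀ t ∈ Icc (0 : ℝ) 1, HasDerivAt I 0 t := fun t ht => by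
    have hzero := setIntegral_fderiv_comp_mul_det_eq_zero μ hU hUb (h := fun x => h x - t • a)
      (fun x hx => (hh x hx).sub contDiffAt_const) hθ (hs t ht) a
    simp only [fderiv_sub_const] at hzero
    simpa only [hzero, neg_zero] using
      hasDerivAt_setIntegral_comp_sub_smul_mul_det μ hUb hh hθ hθc a t
  have hconst := constant_of_has_deriv_right_zero
    (fun t ht => (hI t ht).continuousAt.continuousWithinAt)
    (fun t ht => (hI t (Ico_subset_Icc_self ht)).hasDerivWithinAt) 1 (right_mem_Icc.2 zero_le_one)
  simpa only [I, one_smul, zero_smul, sub_zero] using hconst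

end DegreeIntegral

section Degree

theorem eq_zero_of_support_subset_ball {E : Type*} [NormedAddCommGroup E] {ψ : E → ℝ} {ρ : ℝ}
    (hψ : Function.support ψ ⊆ ball 0 ρ) {y q : E} (hy : y ∉ ball q ρ) : ψ (y - q) = 0 :=
  Function.notMem_support.1 fun h => hy
    (by simpa only [mem_ball, dist_eq_norm, sub_zero] using hψ h)

variable {E : Type*} [NormedAddCommGroup E] [NormedSpace ℂ E]

/-- `q` is a regular value of `h` on `S`: the derivative of `h` is invertible at every point of `S`
over `q`. -/
def IsRegularValue (h : E → E) (S : Set E) (q : E) : Prop :=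
  ∀ x ∈ S, h x = q → Function.Bijective (fderiv ℂ h x)

theorem IsRegularValue.mono {h : E → E} {S T : Set E} {q : E} (hq : IsRegularValue h T q)
    (hST : S ⊆ T) : IsRegularValue h S q :=
  fun x hx => hq x (hST hx)

/-- The data for which the degree of `h` on `U` over `q` makes sense: `U` is open and bounded, `h`
is holomorphic near its closure and omits the value `q` on its frontier. -/
structure IsAdmissible (h : E → E) (U : Set E) (q : E) : Prop where
  isOpen : IsOpen U
  isBounded : Bornology.IsBounded U
  analyticOnNhd : AnalyticOnNhd ℂ h (closure U)
  ne_of_mem_frontier : ∀ x ∈ frontier U, h x ≠ q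

/-- The degree of `h` on `U` over `q`: the number of solutions in `U` of `h x = y` for any regular
value `y` close enough to `q`. -/
def degree (h : E → E) (U : Set E) (q : E) : ℕ :=
  sInf {m | ∀ᶠ y in 𝓝 q, IsRegularValue h U y → (U ∩ h ⁻¹' {y}).ncard = m}

theorem bijective_iff_det_ne_zero [FiniteDimensional ℂ E] (A : E →L[ℂ] E) :
    Function.Bijective A ↔ A.det ≠ 0 := by
  rw [← isUnit_iff_ne_zero, ContinuousLinearMap.det, ← LinearMap.isUnit_iff_isUnit_det,
    Module.End.isUnit_iff]
  rfl

theorem det_fderiv_real {h : E → E} {x : E} (hh : DifferentiableAt ℂ h x) :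
    (fderiv ℝ h x).det = Complex.normSq (fderiv ℂ h x).det := by
  rw [hh.fderiv_restrictScalars ℝ, ← Algebra.norm_complex_apply]
  exact LinearMap.det_restrictScalars (R := ℝ) (f := (fderiv ℂ h x : E →ₗ[ℂ] E))

theorem continuousOn_det_fderiv [CompleteSpace E] {h : E → E} {S : Set E}
    (hh : AnalyticOnNhd ℂ h S) : ContinuousOn (fun x => (fderiv ℂ h x).det) S :=
  ContinuousLinearMap.continuous_det.comp_continuousOn hh.fderiv.continuousOn

theorem isOpen_setOf_isRegularValue [FiniteDimensional ℂ E] {h : E → E} {K : Set E}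
    (hK : IsCompact K) (hh : AnalyticOnNhd ℂ h K) : IsOpen {q | IsRegularValue h K q} := by
  have := FiniteDimensional.complete ℂ E
  have hcrit : IsCompact (K ∩ (fun x => (fderiv ℂ h x).det) ⁻¹' {0}) :=
    hK.of_isClosed_subset ((continuousOn_det_fderiv hh).preimage_isClosed_of_isClosed hK.isClosed
      isClosed_singleton) inter_subset_left
  have himage := hcrit.image_of_continuousOn (hh.continuousOn.mono inter_subset_left)
  convert himage.isClosed.isOpen_compl using 1
  ext q
  simp only [IsRegularValue, bijective_iff_det_ne_zero, mem_ofPred_eq, mem_compl_iff, mem_image,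
    mem_inter_iff, mem_preimage, mem_singleton_iff]
  grind

theorem dense_setOf_isRegularValue [FiniteDimensional ℂ E] {h : E → E} {S : Set E}
    (hh : ∀ x ∈ S, DifferentiableAt ℂ h x) : Dense {q | IsRegularValue h S q} := by
  borelize E
  let μ : Measure E := Measure.addHaar
  let C : Set E := {x ∈ S | (fderiv ℂ h x).det = 0}
  have hnull : μ (h '' C) = 0 :=
    addHaar_image_eq_zero_of_det_fderivWithin_eq_zero μ (f' := fderiv ℝ h)
      (fun x hx => ((hh x hx.1).restrictScalars ℝ).hasFDerivAt.hasFDerivWithinAt)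
      (fun x hx => by rw [det_fderiv_real (hh x hx.1), hx.2, map_zero])
  refine (Measure.dense_of_ae (compl_mem_ae_iff.2 hnull)).mono fun q hq x hx hxq => ?_
  exact (bijective_iff_det_ne_zero _).2 fun h0 => hq ⟨x, ⟨hx, h0⟩, hxq⟩

theorem exists_isOpen_injOn_isOpen_image [CompleteSpace E] {h : E → E} {x : E}
    (hh : AnalyticAt ℂ h x) (hx : Function.Bijective (fderiv ℂ h x)) {W : Set E} (hW : W ∈ 𝓝 x) :
    ∃ V ⊆ W, IsOpen V ∧ x ∈ V ∧ InjOn h V ∧ (∀ V' ⊆ V, IsOpen V' → IsOpen (h '' V')) := by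
  let e : E ≃L[ℂ] E := ContinuousLinearEquiv.ofBijective (fderiv ℂ h x)
    (LinearMap.ker_eq_bot.2 hx.1) (LinearMap.range_eq_top.2 hx.2)
  have hs : HasStrictFDerivAt h (e : E →L[ℂ] E) x := by
    rw [ContinuousLinearEquiv.coe_ofBijective]
    exact hh.hasStrictFDerivAt
  let Φ := hs.toOpenPartialHomeomorph h
  obtain ⟨V, hVW, hVo, hxV⟩ := _root_.mem_nhds_iff.1 hW
  refine ⟨Φ.source ∩ V, fun y hy => hVW hy.2, Φ.open_source.inter hVo,
    ⟨hs.mem_toOpenPartialHomeomorph_source, hxV⟩, Φ.injOn.mono inter_subset_left,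
    fun V' hV' hV'o => Φ.isOpen_image_of_subset_source hV'o (hV'.trans inter_subset_left)⟩

theorem setIntegral_comp_mul_det_of_injOn [FiniteDimensional ℂ E] [MeasurableSpace E]
    [BorelSpace E] (μ : Measure E) [μ.IsAddHaarMeasure] {h : E → E} {V : Set E} {q : E} {ρ : ℝ}
    (hV : MeasurableSet V) (hh : ∀ x ∈ V, DifferentiableAt ℂ h x) (hinj : InjOn h V)
    (him : h '' V = ball q ρ) {ψ : E → ℝ} (hψ : Function.support ψ ⊆ ball 0 ρ) :
    ∫ x in V, ψ (h x - q) * (fderiv ℝ h x).det ∂μ = ∫ y, ψ y ∂μ := by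
  have hchange := integral_image_eq_integral_abs_det_fderiv_smul μ hV
    (fun x hx => ((hh x hx).restrictScalars ℝ).hasFDerivAt.hasFDerivWithinAt) hinj
    (fun y => ψ (y - q))
  rw [him, setIntegral_eq_integral_of_forall_compl_eq_zero
    fun y hy => eq_zero_of_support_subset_ball hψ hy, integral_sub_right_eq_self ψ q] at hchange
  refine (setIntegral_congr_fun hV fun x hx => ?_).trans hchange.symm
  rw [det_fderiv_real (hh x hx), abs_of_nonneg (Complex.normSq_nonneg _), smul_eq_mul, mul_comm]

variable {h : E → E} {U : Set E} {q : E}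

namespace IsAdmissible

theorem mem_of_mem_closure (hq : IsAdmissible h U q) {x : E} (hx : x ∈ closure U) (hxq : h x = q) :
    x ∈ U :=
  by_contra fun hxU => hq.ne_of_mem_frontier x ⟨hx, by rwa [hq.isOpen.interior_eq]⟩ hxq

theorem isRegularValue_closure (hq : IsAdmissible h U q) (hreg : IsRegularValue h U q) :
    IsRegularValue h (closure U) q := fun x hx hxq => hreg x (hq.mem_of_mem_closure hx hxq) hxq

variable [FiniteDimensional ℂ E]

theorem isCompact_closure (hq : IsAdmissible h U q) : IsCompact (closure U) :=
  have := FiniteDimensional.proper ℂ E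
  hq.isBounded.isCompact_closure

theorem isCompact_image_frontier (hq : IsAdmissible h U q) : IsCompact (h '' frontier U) :=
  (hq.isCompact_closure.of_isClosed_subset isClosed_frontier
    frontier_subset_closure).image_of_continuousOn
    (hq.analyticOnNhd.continuousOn.mono frontier_subset_closure)

theorem eventually (hq : IsAdmissible h U q) : ∀ᶠ y in 𝓝 q, IsAdmissible h U y := by
  filter_upwards [hq.isCompact_image_frontier.isClosed.isOpen_compl.mem_nhds
    fun ⟨x, hx, hxq⟩ => hq.ne_of_mem_frontier x hx hxq] with y hy
  exact ⟨hq.isOpen, hq.isBounded, hq.analyticOnNhd, fun x hx hxy => hy ⟨x, hx, hxy⟩⟩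

theorem isCompact_fiber (hq : IsAdmissible h U q) : IsCompact (U ∩ h ⁻¹' {q}) := by
  have : U ∩ h ⁻¹' {q} = closure U ∩ h ⁻¹' {q} :=
    (inter_subset_inter_left _ subset_closure).antisymm
      fun x hx => ⟨hq.mem_of_mem_closure hx.1 hx.2, hx.2⟩
  rw [this]
  exact hq.isCompact_closure.of_isClosed_subset
    (hq.analyticOnNhd.continuousOn.preimage_isClosed_of_isClosed isClosed_closure
      isClosed_singleton) inter_subset_left

theorem finite_fiber (hq : IsAdmissible h U q) (hreg : IsRegularValue h U q) :
    (U ∩ h ⁻¹' {q}).Finite := by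
  have := FiniteDimensional.complete ℂ E
  refine hq.isCompact_fiber.finite (isDiscrete_iff_forall_mem_exists_isOpen.2 fun x hx => ?_)
  obtain ⟨V, -, hVo, hxV, hinj, -⟩ := exists_isOpen_injOn_isOpen_image
    (hq.analyticOnNhd x (subset_closure hx.1)) (hreg x hx.1 hx.2) univ_mem
  exact ⟨V, hVo, subset_antisymm (fun y hy => hinj hy.1 hxV (hy.2.2.trans hx.2.symm))
    (singleton_subset_iff.2 ⟨hxV, hx⟩)⟩

theorem eventually_fiber_subset (hq : IsAdmissible h U q) {W : Set E} (hW : IsOpen W)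
    (hsub : U ∩ h ⁻¹' {q} ⊆ W) : ∀ᶠ y in 𝓝 q, U ∩ h ⁻¹' {y} ⊆ W := by
  have hclosed : IsClosed (h '' (closure U \ W)) :=
    ((hq.isCompact_closure.diff hW).image_of_continuousOn
      (hq.analyticOnNhd.continuousOn.mono sdiff_subset)).isClosed
  filter_upwards [hclosed.isOpen_compl.mem_nhds fun ⟨x, hx, hxq⟩ =>
    hx.2 (hsub ⟨hq.mem_of_mem_closure hx.1 hxq, hxq⟩)] with y hy x hx
  exact by_contra fun hxW => hy ⟨x, ⟨subset_closure hx.1, hxW⟩, hx.2⟩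

theorem eventually_exists_sheets (hq : IsAdmissible h U q) (hreg : IsRegularValue h U q) :
    ∀ᶠ ρ in 𝓝[>] (0 : ℝ), ∃ V : E → Set E,
      (∀ x ∈ U ∩ h ⁻¹' {q}, IsOpen (V x) ∧ InjOn h (V x) ∧ h '' V x = ball q ρ) ∧
      (U ∩ h ⁻¹' {q}).PairwiseDisjoint V ∧
      ⋃ x ∈ U ∩ h ⁻¹' {q}, V x = U ∩ h ⁻¹' ball q ρ := by
  have := FiniteDimensional.complete ℂ E
  have hfin := hq.finite_fiber hreg
  obtain ⟨D, hD, hDdisj⟩ := hfin.t2_separation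
  have hloc : ∀ x ∈ U ∩ h ⁻¹' {q}, ∃ W ⊆ U ∩ D x, IsOpen W ∧ x ∈ W ∧ InjOn h W ∧
      ∀ W' ⊆ W, IsOpen W' → IsOpen (h '' W') := fun x hx =>
    exists_isOpen_injOn_isOpen_image (hq.analyticOnNhd x (subset_closure hx.1))
      (hreg x hx.1 hx.2) ((hq.isOpen.inter (hD x).2).mem_nhds ⟨hx.1, (hD x).1⟩)
  choose! W hWD hWo hxW hWinj hWim using hloc
  have him : ∀ᶠ y in 𝓝 q, ∀ x ∈ U ∩ h ⁻¹' {q}, y ∈ h '' W x :=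
    hfin.eventually_all.2 fun x hx => (hWim x hx _ subset_rfl (hWo x hx)).mem_nhds
      ⟨x, hxW x hx, hx.2⟩
  obtain ⟨ε, hε, hball⟩ := Metric.eventually_nhds_iff_ball.1 (him.and
    (hq.eventually_fiber_subset (isOpen_biUnion hWo) fun x hx => mem_biUnion hx (hxW x hx)))
  filter_upwards [Ioo_mem_nhdsGT hε] with ρ hρ
  have hball := fun y hy => hball y (ball_subset_ball hρ.2.le hy)
  refine ⟨fun x => W x ∩ h ⁻¹' ball q ρ, fun x hx => ⟨?_, ?_, ?_⟩, ?_, ?_⟩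
  · exact (hq.analyticOnNhd.continuousOn.mono
      ((hWD x hx).trans (inter_subset_left.trans subset_closure))).isOpen_inter_preimage
      (hWo x hx) isOpen_ball
  · exact (hWinj x hx).mono inter_subset_left
  · rw [image_inter_preimage, inter_eq_right]
    exact fun y hy => (hball y hy).1 x hx
  · exact fun x hx y hy hxy => (hDdisj hx hy hxy).mono
      (inter_subset_left.trans ((hWD x hx).trans inter_subset_right))
      (inter_subset_left.trans ((hWD y hy).trans inter_subset_right))
  · rw [← iUnion₂_inter]
    exact subset_antisymm (inter_subset_inter_left _ (iUnion₂_subset fun x hx =>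
      (hWD x hx).trans inter_subset_left)) fun x hx => ⟨(hball _ hx.2).2 ⟨hx.1, rfl⟩, hx.2⟩

theorem contDiffAt_real (hq : IsAdmissible h U q) : ∀ x ∈ closure U, ContDiffAt ℝ 2 h x :=
  have := FiniteDimensional.complete ℂ E
  fun x hx => (hq.analyticOnNhd x hx).contDiffAt.restrict_scalars ℝ

theorem eventually_setIntegral_eq_ncard_mul [MeasurableSpace E] [BorelSpace E] (μ : Measure E)
    [μ.IsAddHaarMeasure] (hq : IsAdmissible h U q) (hreg : IsRegularValue h U q) :
    ∀ᶠ ρ in 𝓝[>] (0 : ℝ), ∀ ψ : E → ℝ, Continuous ψ → Function.support ψ ⊆ ball 0 ρ →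
      ∫ x in U, ψ (h x - q) * (fderiv ℝ h x).det ∂μ = (U ∩ h ⁻¹' {q}).ncard * ∫ y, ψ y ∂μ := by
  have hfin := hq.finite_fiber hreg
  filter_upwards [hq.eventually_exists_sheets hreg] with ρ ⟨V, hV, hVdisj, hVunion⟩ ψ hψ hsupp
  have hVU : ∀ x ∈ U ∩ h ⁻¹' {q}, V x ⊆ U := fun x hx =>
    (hVunion ▸ subset_biUnion_of_mem hx : V x ⊆ U ∩ h ⁻¹' ball q ρ).trans inter_subset_left
  have hint : IntegrableOn (fun x => ψ (h x - q) * (fderiv ℝ h x).det) U μ :=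
    integrableOn_comp_mul_det (θ := fun y => ψ (y - q)) μ hq.isBounded hq.contDiffAt_real
      (hψ.comp (continuous_sub_right q))
  have hsheet : ∀ x ∈ hfin.toFinset,
      ∫ y in V x, ψ (h y - q) * (fderiv ℝ h y).det ∂μ = ∫ y, ψ y ∂μ := fun x hx => by
    have hx := hfin.mem_toFinset.1 hx
    obtain ⟨hVo, hinj, him⟩ := hV x hx
    exact setIntegral_comp_mul_det_of_injOn μ hVo.measurableSet (fun y hy =>
      (hq.analyticOnNhd y (subset_closure (hVU x hx hy))).differentiableAt) hinj him hsupp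
  calc ∫ x in U, ψ (h x - q) * (fderiv ℝ h x).det ∂μ
      = ∫ x in ⋃ x ∈ U ∩ h ⁻¹' {q}, V x, ψ (h x - q) * (fderiv ℝ h x).det ∂μ := by
        rw [hVunion]
        refine setIntegral_eq_of_subset_of_forall_sdiff_eq_zero hq.isOpen.measurableSet
          inter_subset_left fun x hx => ?_
        rw [eq_zero_of_support_subset_ball hsupp fun hxρ => hx.2 ⟨hx.1, hxρ⟩, zero_mul]
    _ = ∑ x ∈ hfin.toFinset, ∫ y in V x, ψ (h y - q) * (fderiv ℝ h y).det ∂μ := by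
        rw [← integral_biUnion_finset hfin.toFinset]
        · simp only [Finite.mem_toFinset]
        · exact fun x hx => (hV x (hfin.mem_toFinset.1 hx)).1.measurableSet
        · rwa [hfin.coe_toFinset]
        · exact fun x hx => hint.mono_set (hVU x (hfin.mem_toFinset.1 hx))
    _ = (U ∩ h ⁻¹' {q}).ncard * ∫ y, ψ y ∂μ := by
        rw [Finset.sum_congr rfl hsheet, Finset.sum_const,
          nsmul_eq_mul, ncard_eq_toFinset_card _ hfin]

theorem ncard_fiber_eq_of_segment {q₁ q₂ : E} (h₁ : IsAdmissible h U q₁)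
    (hreg₁ : IsRegularValue h U q₁) (hreg₂ : IsRegularValue h U q₂)
    (hseg : ∀ x ∈ frontier U, h x ∉ segment ℝ q₁ q₂) :
    (U ∩ h ⁻¹' {q₁}).ncard = (U ∩ h ⁻¹' {q₂}).ncard := by
  borelize E
  let μ : Measure E := Measure.addHaar
  have h₂ : IsAdmissible h U q₂ := ⟨h₁.isOpen, h₁.isBounded, h₁.analyticOnNhd, fun x hx hxq =>
    hseg x hx (hxq ▸ right_mem_segment ℝ q₁ q₂)⟩
  have hfar : ∀ᶠ ρ in 𝓝[>] (0 : ℝ), ∀ x ∈ frontier U, h x ∉ cthickening ρ (segment ℝ q₁ q₂) := by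
    have hcompact : IsCompact (segment ℝ q₁ q₂) := by
      rw [segment_eq_image']
      exact isCompact_Icc.image (by fun_prop)
    obtain ⟨ε, hε, hsub⟩ := hcompact.exists_cthickening_subset_open
      h₁.isCompact_image_frontier.isClosed.isOpen_compl
      fun y hy ⟨x, hx, hxy⟩ => hseg x hx (hxy ▸ hy)
    filter_upwards [Ioo_mem_nhdsGT hε] with ρ hρ x hx hmem
    exact hsub (cthickening_mono hρ.2.le _ hmem) (mem_image_of_mem h hx)
  obtain ⟨ρ, hcount₁, hcount₂, hρfar, hρ⟩ := ((h₁.eventually_setIntegral_eq_ncard_mul μ hreg₁).and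
    ((h₂.eventually_setIntegral_eq_ncard_mul μ hreg₂).and
      (hfar.and self_mem_nhdsWithin))).exists
  have hρ : 0 < ρ := hρ
  let φ : ContDiffBump (0 : E) := ⟨ρ / 2, ρ, half_pos hρ, half_lt_self hρ⟩
  let ψ := φ.normed μ
  have hshift := setIntegral_comp_sub_mul_det μ (h := fun x => h x - q₁) (θ := ψ) h₁.isOpen
    h₁.isBounded (fun x hx => (h₁.contDiffAt_real x hx).sub contDiffAt_const) φ.contDiff_normed
    φ.hasCompactSupport_normed (q₂ - q₁) fun t ht x hx hmem => hρfar x hx ?_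
  · simp only [fderiv_sub_const, sub_sub_sub_cancel_right] at hshift
    rw [hcount₁ ψ φ.continuous_normed φ.support_normed_eq.subset,
      hcount₂ ψ φ.continuous_normed φ.support_normed_eq.subset, φ.integral_normed, mul_one,
      mul_one] at hshift
    exact_mod_cast hshift.symm
  · rw [φ.tsupport_normed_eq, mem_closedBall_zero_iff, sub_sub] at hmem
    refine mem_cthickening_of_dist_le _ (q₁ + t • (q₂ - q₁)) _ _ ?_ (by rwa [dist_eq_norm])
    rw [segment_eq_image']
    exact mem_image_of_mem _ ht

theorem exists_isRegularValue (hq : IsAdmissible h U q) {p : E → Prop} (hp : ∀ᶠ y in 𝓝 q, p y) :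
    ∃ y, p y ∧ IsAdmissible h U y ∧ IsRegularValue h U y := by
  obtain ⟨y, hreg, hpy, hy⟩ := (dense_setOf_isRegularValue fun x hx =>
    (hq.analyticOnNhd x (subset_closure hx)).differentiableAt).inter_nhds_nonempty
    (hp.and hq.eventually)
  exact ⟨y, hpy, hy, hreg⟩

theorem eventually_isRegularValue (hq : IsAdmissible h U q) (hreg : IsRegularValue h U q) :
    ∀ᶠ y in 𝓝 q, IsRegularValue h U y := by
  filter_upwards [(isOpen_setOf_isRegularValue hq.isCompact_closure hq.analyticOnNhd).mem_nhds
    (hq.isRegularValue_closure hreg)] with y hy using hy.mono subset_closure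

theorem exists_isRegularValue_and {g : E → E} (hg : IsAdmissible g U q) (hh : IsAdmissible h U q)
    {p : E → Prop} (hp : ∀ᶠ y in 𝓝 q, p y) :
    ∃ y, p y ∧ (IsAdmissible g U y ∧ IsRegularValue g U y) ∧
      IsAdmissible h U y ∧ IsRegularValue h U y := by
  obtain ⟨y₀, hpy₀, hgy₀, hgreg₀⟩ := hg.exists_isRegularValue (hp.and hh.eventually).eventually_nhds
  obtain ⟨y, ⟨⟨hpy, -⟩, hgy⟩, hhy⟩ := hpy₀.self_of_nhds.2.exists_isRegularValue
    (hpy₀.and (hgy₀.eventually.and (hgy₀.eventually_isRegularValue hgreg₀)))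
  exact ⟨y, hpy, hgy, hhy⟩

theorem eventually_ncard_fiber_eq_degree (hq : IsAdmissible h U q) :
    ∀ᶠ y in 𝓝 q, IsRegularValue h U y → (U ∩ h ⁻¹' {y}).ncard = degree h U q := by
  obtain ⟨ε, hε, hball⟩ := Metric.eventually_nhds_iff_ball.1 hq.eventually
  obtain ⟨y₀, hy₀, -, hreg₀⟩ := hq.exists_isRegularValue (ball_mem_nhds q hε)
  refine Nat.sInf_mem (s := {m | ∀ᶠ y in 𝓝 q, IsRegularValue h U y → (U ∩ h ⁻¹' {y}).ncard = m})
    ⟨(U ∩ h ⁻¹' {y₀}).ncard, ?_⟩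
  filter_upwards [ball_mem_nhds q hε] with y hy hreg
  refine (hball y hy).ncard_fiber_eq_of_segment hreg hreg₀ fun x hx hmem => ?_
  exact (hball (h x) ((convex_ball q ε).segment_subset hy hy₀ hmem)).ne_of_mem_frontier x hx rfl

theorem ncard_fiber_eq_degree (hq : IsAdmissible h U q) (hreg : IsRegularValue h U q) :
    (U ∩ h ⁻¹' {q}).ncard = degree h U q :=
  hq.eventually_ncard_fiber_eq_degree.self_of_nhds hreg

theorem degree_eq (hq : IsAdmissible h U q) {m : ℕ}
    (hm : ∀ᶠ y in 𝓝 q, IsRegularValue h U y → (U ∩ h ⁻¹' {y}).ncard = m) : degree h U q = m := by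
  obtain ⟨y, ⟨hym, hy⟩, -, hreg⟩ :=
    hq.exists_isRegularValue (hm.and hq.eventually_ncard_fiber_eq_degree)
  rw [← hy hreg, hym hreg]

theorem card_le_degree (hq : IsAdmissible h U q) {S : Finset E} (hSU : ∀ x ∈ S, x ∈ U)
    (hSq : ∀ x ∈ S, h x = q) (hS : ∀ x ∈ S, Function.Bijective (fderiv ℂ h x)) :
    S.card ≤ degree h U q := by
  have := FiniteDimensional.complete ℂ E
  obtain ⟨D, hD, hDdisj⟩ := S.finite_toSet.t2_separation
  have him : ∀ x ∈ S, h '' (U ∩ D x) ∈ 𝓝 q := fun x hx => by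
    obtain ⟨V, hVW, hVo, hxV, -, hopen⟩ := exists_isOpen_injOn_isOpen_image
      (hq.analyticOnNhd x (subset_closure (hSU x hx))) (hS x hx)
      ((hq.isOpen.inter (hD x).2).mem_nhds ⟨hSU x hx, (hD x).1⟩)
    exact mem_of_superset ((hopen V subset_rfl hVo).mem_nhds ⟨x, hxV, hSq x hx⟩) (image_mono hVW)
  obtain ⟨y, ⟨hyim, hydeg⟩, hy, hreg⟩ := hq.exists_isRegularValue
    ((S.eventually_all.2 him).and hq.eventually_ncard_fiber_eq_degree)
  choose! ξ hξ hξy using hyim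
  rw [← hydeg hreg, ← ncard_coe_finset]
  refine ncard_le_ncard_of_injOn ξ (fun x hx => ⟨(hξ x hx).1, hξy x hx⟩) (fun x hx x' hx' he => ?_)
    (hy.finite_fiber hreg)
  by_contra hne
  exact disjoint_left.1 (hDdisj hx hx' hne) (hξ x hx).2 (he ▸ (hξ x' hx').2)

end IsAdmissible

end Degree

section Families

theorem fiber_prodMk_fst {P E : Type*} {H : P → E → E} {B : Set P} {U : Set E} {t : P} (ht : t ∈ B)
    (y : E) :
    (B ×ˢ U) ∩ (fun p : P × E => (p.1, H p.1 p.2)) ⁻¹' {(t, y)} =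
      Prod.mk t '' (U ∩ H t ⁻¹' {y}) := by
  ext ⟨s, x⟩
  simp only [mem_inter_iff, mem_prod, mem_preimage, mem_singleton_iff, Prod.mk.injEq, mem_image]
  grind

variable {P E : Type*} [NormedAddCommGroup P] [NormedSpace ℂ P] [NormedAddCommGroup E]
  [NormedSpace ℂ E] {H : P → E → E} {U : Set E} {t₀ : P} {q : E}

theorem fderiv_prodMk_fst {t : P} {x : E} (hH : AnalyticAt ℂ (fun p : P × E => H p.1 p.2) (t, x))
    (v : P × E) : fderiv ℂ (fun p : P × E => (p.1, H p.1 p.2)) (t, x) v =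
      (v.1, fderiv ℂ (fun p : P × E => H p.1 p.2) (t, x) v) := by
  rw [(differentiableAt_fst.fderiv_prodMk hH.differentiableAt), fderiv_fst]
  rfl

theorem fderiv_family {t : P} {x : E} (hH : AnalyticAt ℂ (fun p : P × E => H p.1 p.2) (t, x))
    (v : E) : fderiv ℂ (H t) x v = fderiv ℂ (fun p : P × E => H p.1 p.2) (t, x) (0, v) := by
  have := hH.differentiableAt.hasFDerivAt.comp x (hasFDerivAt_prodMk_right t x)
  rw [show H t = (fun p : P × E => H p.1 p.2) ∘ fun x => (t, x) from rfl, this.fderiv]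
  rfl

theorem bijective_fderiv_prodMk_fst {t : P} {x : E}
    (hH : AnalyticAt ℂ (fun p : P × E => H p.1 p.2) (t, x)) :
    Function.Bijective (fderiv ℂ (fun p : P × E => (p.1, H p.1 p.2)) (t, x)) ↔
      Function.Bijective (fderiv ℂ (H t) x) := by
  rw [funext (fderiv_prodMk_fst hH), funext (fderiv_family hH)]
  set L := fderiv ℂ (fun p : P × E => H p.1 p.2) (t, x)
  have hL (v : P × E) : L v = L (v.1, 0) + L (0, v.2) := by
    rw [← map_add, Prod.fst_add_snd]
  refine ⟨fun ⟨hinj, hsurj⟩ => ⟨fun w w' hw => ?_, fun y => ?_⟩,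
    fun ⟨hinj, hsurj⟩ => ⟨fun v v' hv => ?_, fun y => ?_⟩⟩
  · exact (Prod.mk.inj (@hinj (0, w) (0, w') (Prod.ext rfl hw))).2
  · obtain ⟨⟨v, w⟩, hvw⟩ := hsurj (0, y)
    obtain ⟨rfl, hw⟩ := Prod.mk.inj hvw
    exact ⟨w, hw⟩
  · obtain ⟨hfst, hsnd⟩ := Prod.mk.inj hv
    rw [hL v, hL v', hfst, add_right_inj] at hsnd
    exact Prod.ext hfst (hinj hsnd)
  · obtain ⟨w, hw⟩ := hsurj (y.2 - L (y.1, 0))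
    exact ⟨(y.1, w), Prod.ext rfl ((hL _).trans (eq_sub_iff_add_eq'.1 hw))⟩

theorem eventually_isAdmissible_family [ProperSpace E]
    (hH : ∀ x ∈ closure U, AnalyticAt ℂ (fun p : P × E => H p.1 p.2) (t₀, x))
    (hq : IsAdmissible (H t₀) U q) :
    ∀ᶠ t in 𝓝 t₀, (∀ x ∈ closure U, AnalyticAt ℂ (fun p : P × E => H p.1 p.2) (t, x)) ∧
      IsAdmissible (H t) U q := by
  have hcompact : IsCompact (closure U) := hq.isBounded.isCompact_closure
  have hanalytic : ∀ᶠ t in 𝓝 t₀, ∀ x ∈ closure U,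
      AnalyticAt ℂ (fun p : P × E => H p.1 p.2) (t, x) :=
    hcompact.eventually_forall_of_forall_eventually fun x hx => (hH x hx).eventually_analyticAt
  have hne : ∀ᶠ t in 𝓝 t₀, ∀ x ∈ frontier U, H t x ≠ q :=
    (hcompact.of_isClosed_subset isClosed_frontier
      frontier_subset_closure).eventually_forall_of_forall_eventually fun x hx =>
      (hH x (frontier_subset_closure hx)).continuousAt.eventually_ne (hq.ne_of_mem_frontier x hx)
  filter_upwards [hanalytic, hne] with t ht htq
  exact ⟨ht, hq.isOpen, hq.isBounded, fun x hx => (ht x hx).comp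
    (f := fun x => (t, x)) (analyticAt_const.prod analyticAt_id), htq⟩

theorem isAdmissible_prodMk_fst {ε : ℝ}
    (hH : ∀ t ∈ closedBall t₀ ε, ∀ x ∈ closure U, AnalyticAt ℂ (fun p : P × E => H p.1 p.2) (t, x))
    (hq : IsAdmissible (H t₀) U q) (hε : 0 < ε) :
    IsAdmissible (fun p : P × E => (p.1, H p.1 p.2)) (ball t₀ ε ×ˢ U) (t₀, q) where
  isOpen := isOpen_ball.prod hq.isOpen
  isBounded := isBounded_ball.prod hq.isBounded
  analyticOnNhd := fun p hp => by
    rw [closure_prod_eq] at hp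
    exact analyticAt_fst.prod (hH p.1 (closure_ball_subset_closedBall hp.1) p.2 hp.2)
  ne_of_mem_frontier := fun p hp he => by
    obtain ⟨rfl, hpq⟩ := Prod.mk.inj he
    rw [frontier_prod_eq, isOpen_ball.frontier_eq] at hp
    rcases hp with hp | hp
    · exact hq.ne_of_mem_frontier p.2 hp.2 hpq
    · exact hp.1.2 (mem_ball_self hε)

theorem IsAdmissible.eventually_degree_family_eq [FiniteDimensional ℂ P] [FiniteDimensional ℂ E]
    (hH : ∀ x ∈ closure U, AnalyticAt ℂ (fun p : P × E => H p.1 p.2) (t₀, x))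
    (hq : IsAdmissible (H t₀) U q) :
    ∀ᶠ t in 𝓝 t₀, IsAdmissible (H t) U q ∧ degree (H t) U q = degree (H t₀) U q := by
  have := FiniteDimensional.proper ℂ E
  have hadm := eventually_isAdmissible_family hH hq
  obtain ⟨ε, hε, hball⟩ := (nhds_basis_closedBall.eventually_iff).1 hadm
  let Ĥ : P × E → P × E := fun p => (p.1, H p.1 p.2)
  have hĤ := isAdmissible_prodMk_fst (H := H) (fun t ht => (hball ht).1) hq hε
  have hfib : ∀ᶠ p in 𝓝 (t₀, q), IsRegularValue (H p.1) U p.2 →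
      (U ∩ H p.1 ⁻¹' {p.2}).ncard = degree Ĥ (ball t₀ ε ×ˢ U) (t₀, q) := by
    filter_upwards [hĤ.eventually_ncard_fiber_eq_degree,
      (continuous_fst.tendsto (t₀, q)).eventually (ball_mem_nhds t₀ hε)] with ⟨t, y⟩ hp ht hreg
    rw [← hp, fiber_prodMk_fst (mem_ball.2 ht) y,
      ncard_image_of_injective _ (Prod.mk_right_injective t)]
    rintro ⟨s, x⟩ hx he
    obtain ⟨rfl, hxy⟩ := Prod.mk.inj he
    exact (bijective_fderiv_prodMk_fst ((hball (ball_subset_closedBall ht)).1 x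
      (subset_closure hx.2))).2 (hreg x hx.2 hxy)
  have hdeg : ∀ᶠ t in 𝓝 t₀, degree (H t) U q = degree Ĥ (ball t₀ ε ×ˢ U) (t₀, q) := by
    filter_upwards [hadm, hfib.curry_nhds] with t ht hy
    exact ht.2.degree_eq hy
  filter_upwards [hadm, hdeg] with t ht hdegt using ⟨ht.2, hdegt.trans hdeg.self_of_nhds.symm⟩

end Families

section Systems

theorem isRegularValue_sub_const {E : Type*} [NormedAddCommGroup E] [NormedSpace ℂ E] {G : E → E}
    {S : Set E} {q : E} : IsRegularValue (fun x => G x - q) S 0 ↔ IsRegularValue G S q := by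
  simp only [IsRegularValue, sub_eq_zero, fderiv_sub_const]

variable {ι : Type*} [Fintype ι] {U : Set (ι → ℂ)} {M : (ι → ℂ) → Matrix ι ι ℂ}
  {G : (ι → ℂ) → ι → ℂ}

theorem analyticAt_mulVec {P : Type*} [NormedAddCommGroup P] [NormedSpace ℂ P]
    {N : P → Matrix ι ι ℂ} {v : P → ι → ℂ} {p : P} (hN : ∀ i j, AnalyticAt ℂ (fun p => N p i j) p)
    (hv : AnalyticAt ℂ v p) : AnalyticAt ℂ (fun p => N p *ᵥ v p) p :=
  AnalyticAt.pi fun i => Finset.analyticAt_fun_sum _ fun j _ =>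
    (hN i j).mul ((analyticAt_pi_iff.1 hv) j)

theorem fderiv_mulVec_of_eq_zero {x : ι → ℂ} (hM : ∀ i j, DifferentiableAt ℂ (fun y => M y i j) x)
    (hG : DifferentiableAt ℂ G x) (hx : G x = 0) (v : ι → ℂ) :
    fderiv ℂ (fun y => M y *ᵥ G y) x v = M x *ᵥ fderiv ℂ G x v := by
  have hGj (j : ι) : HasFDerivAt (fun y => G y j) (.proj j ∘L fderiv ℂ G x) x :=
    hasFDerivAt_pi'.1 hG.hasFDerivAt j
  have hrow (i : ι) : HasFDerivAt (fun y => (M y *ᵥ G y) i)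
      (∑ j, M x i j • (.proj j ∘L fderiv ℂ G x)) x := by
    refine HasFDerivAt.fun_sum fun j _ => ((hM i j).hasFDerivAt.mul (hGj j)).congr_fderiv ?_
    ext w
    simp [hx]
  rw [(hasFDerivAt_pi.2 hrow).fderiv]
  ext i
  simp [Matrix.mulVec, dotProduct]

theorem bijective_fderiv_mulVec [DecidableEq ι] {x : ι → ℂ}
    (hM : ∀ i j, DifferentiableAt ℂ (fun y => M y i j) x)
    (hdet : (M x).det ≠ 0) (hG : DifferentiableAt ℂ G x) (hx : G x = 0)
    (hbij : Function.Bijective (fderiv ℂ G x)) :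
    Function.Bijective (fderiv ℂ (fun y => M y *ᵥ G y) x) := by
  have hunit : IsUnit (M x) := (Matrix.isUnit_iff_isUnit_det _).2 hdet.isUnit
  rw [funext (fderiv_mulVec_of_eq_zero hM hG hx)]
  exact Function.Bijective.comp (g := (M x).mulVec)
    ⟨Matrix.mulVec_injective_iff_isUnit.2 hunit, Matrix.mulVec_surjective_iff_isUnit.2 hunit⟩ hbij

theorem eventually_det_add_smul_one_ne_zero [DecidableEq ι] (A : Matrix ι ι ℂ) :
    ∀ᶠ c in 𝓝[≠] (0 : ℂ), (A + c • 1).det ≠ 0 := by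
  refine nhdsNE_le_cofinite _ ((finite_setOfPred_isRoot (-A).charpoly_monic.ne_zero).subset
    fun c hc => ?_)
  rw [mem_ofPred_eq, IsRoot, Matrix.eval_charpoly, sub_neg_eq_add, add_comm,
    Matrix.scalar_apply, ← Matrix.smul_one_eq_diagonal]
  exact not_not.1 hc

theorem degree_le_degree_mulVec (hM : ∀ i j, AnalyticOnNhd ℂ (fun x => M x i j) (closure U))
    (hG : AnalyticOnNhd ℂ G (closure U)) (hMG : IsAdmissible (fun x => M x *ᵥ G x) U 0) :
    degree G U 0 ≤ degree (fun x => M x *ᵥ G x) U 0 := by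
  have hadm : IsAdmissible G U 0 := ⟨hMG.isOpen, hMG.isBounded, hG, fun x hx hx0 =>
    hMG.ne_of_mem_frontier x hx (by rw [hx0, Matrix.mulVec_zero])⟩
  let H : (ι → ℂ) × ℂ → (ι → ℂ) → ι → ℂ := fun t x => (M x + t.2 • 1) *ᵥ (G x - t.1)
  have hH0 : H (0, 0) = fun x => M x *ᵥ G x := by
    simp only [H, zero_smul, add_zero, sub_zero]
  have hfam : ∀ᶠ t in 𝓝 ((0, 0) : (ι → ℂ) × ℂ),
      IsAdmissible (H t) U 0 ∧ degree (H t) U 0 = degree (fun x => M x *ᵥ G x) U 0 := by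
    rw [← hH0] at hMG ⊢
    refine hMG.eventually_degree_family_eq fun x hx => analyticAt_mulVec (fun i j => ?_) ?_
    · exact ((hM i j x hx).comp_of_eq analyticAt_snd rfl).add
        ((analyticAt_snd.comp analyticAt_fst).mul analyticAt_const)
    · exact ((hG x hx).comp_of_eq analyticAt_snd rfl).sub (analyticAt_fst.comp analyticAt_fst)
  obtain ⟨q, ⟨hcount, hq⟩, hqadm, hreg⟩ := hadm.exists_isRegularValue
    (hadm.eventually_ncard_fiber_eq_degree.and hfam.curry_nhds)
  have hfin := hqadm.finite_fiber hreg
  obtain ⟨c, ⟨hcadm, hc⟩, hdet⟩ := ((hq.filter_mono nhdsWithin_le_nhds).and (hfin.eventually_all.2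
    fun x _ => eventually_det_add_smul_one_ne_zero (M x))).exists
  rw [← hcount hreg, ← hc, ncard_eq_toFinset_card _ hfin]
  have hfiber : ∀ x ∈ hfin.toFinset, x ∈ U ∧ G x - q = 0 := fun x hx =>
    ⟨(hfin.mem_toFinset.1 hx).1, sub_eq_zero.2 (hfin.mem_toFinset.1 hx).2⟩
  refine hcadm.card_le_degree (fun x hx => (hfiber x hx).1) (fun x hx => ?_) fun x hx => ?_
  · simp only [H, (hfiber x hx).2, Matrix.mulVec_zero]
  · have hxU := subset_closure (hfiber x hx).1
    refine bijective_fderiv_mulVec (M := fun y => M y + c • 1) (G := fun y => G y - q)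
      (fun i j => (hM i j x hxU).differentiableAt.add_const _)
      (hdet x (hfin.mem_toFinset.1 hx)) ((hG x hxU).differentiableAt.sub_const q) (hfiber x hx).2
      (isRegularValue_sub_const.2 hreg x (hfiber x hx).1 (hfiber x hx).2)

end Systems

section Products

theorem preimage_sub_const {α E : Type*} [AddGroup E] (G : α → E) (q : E) :
    (fun x => G x - q) ⁻¹' {0} = G ⁻¹' {q} := by
  ext x
  simp only [mem_preimage, mem_singleton_iff, sub_eq_zero]

variable {ι : Type*} [DecidableEq ι] {U : Set (ι → ℂ)} {k : (ι → ℂ) → ι → ℂ} {i : ι}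
  {g h : (ι → ℂ) → ℂ}

theorem update_eq_zero_iff {v : ι → ℂ} {a : ℂ} :
    Function.update v i a = 0 ↔ a = 0 ∧ ∀ j ≠ i, v j = 0 :=
  funext_iff.trans (Function.forall_update_iff v fun _ y => y = 0)

theorem update_sub_update {v q : ι → ℂ} {a s : ℂ} :
    Function.update v i a - Function.update q i s = Function.update (v - q) i (a - s) := by
  ext j
  rcases eq_or_ne j i with rfl | hj
  · simp only [Pi.sub_apply, Function.update_self]
  · simp only [Pi.sub_apply, Function.update_of_ne hj]

theorem fiber_update_mul :
    U ∩ (fun x => Function.update (k x) i (g x * h x)) ⁻¹' {0} =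
      (U ∩ (fun x => Function.update (k x) i (g x)) ⁻¹' {0}) ∪
        (U ∩ (fun x => Function.update (k x) i (h x)) ⁻¹' {0}) := by
  ext x
  simp only [mem_union, mem_inter_iff, mem_preimage, mem_singleton_iff, update_eq_zero_iff,
    mul_eq_zero]
  tauto

theorem bijective_fderiv_update_mul [Finite ι] {x : ι → ℂ}
    (hkg : DifferentiableAt ℂ (fun x => Function.update (k x) i (g x)) x)
    (hh : DifferentiableAt ℂ h x) (hhx : h x ≠ 0)
    (hx : Function.update (k x) i (g x) = 0)
    (hbij : Function.Bijective (fderiv ℂ (fun x => Function.update (k x) i (g x)) x)) :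
    Function.Bijective (fderiv ℂ (fun x => Function.update (k x) i (g x * h x)) x) := by
  have := Fintype.ofFinite ι
  let M : (ι → ℂ) → Matrix ι ι ℂ := fun y => Matrix.diagonal (Function.update 1 i (h y))
  have hM (a b : ι) : DifferentiableAt ℂ (fun y => M y a b) x := by
    rcases eq_or_ne a b with rfl | hab
    · rcases eq_or_ne a i with rfl | ha
      · simpa only [M, Matrix.diagonal_apply_eq, Function.update_self] using hh
      · simp only [M, Matrix.diagonal_apply_eq, Function.update_of_ne ha, Pi.one_apply,
          differentiableAt_const]
    · simp only [M, Matrix.diagonal_apply_ne _ hab, differentiableAt_const]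
  have hdet : (M x).det ≠ 0 := by
    rw [Matrix.det_diagonal, Finset.prod_update_of_mem (Finset.mem_univ i)]
    simpa only [Pi.one_apply, Finset.prod_const_one, mul_one] using hhx
  have hmul : (fun y => Function.update (k y) i (g y * h y)) =
      fun y => M y *ᵥ Function.update (k y) i (g y) := by
    ext y j
    rw [Matrix.mulVec_diagonal]
    rcases eq_or_ne j i with rfl | hj
    · simp only [Function.update_self, mul_comm]
    · simp only [Function.update_of_ne hj, Pi.one_apply, one_mul]
  rw [hmul]
  exact bijective_fderiv_mulVec hM hdet hkg hx hbij

variable [Fintype ι]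

theorem analyticAt_update {P : Type*} [NormedAddCommGroup P] [NormedSpace ℂ P] {v : P → ι → ℂ}
    {a : P → ℂ} {p : P} (hv : AnalyticAt ℂ v p) (ha : AnalyticAt ℂ a p) :
    AnalyticAt ℂ (fun p => Function.update (v p) i (a p)) p := by
  refine analyticAt_pi_iff.2 fun j => ?_
  rcases eq_or_ne j i with rfl | hj
  · simpa only [Function.update_self] using ha
  · simpa only [Function.update_of_ne hj] using analyticAt_pi_iff.1 hv j

theorem IsAdmissible.of_update_mul (hk : AnalyticOnNhd ℂ k (closure U))
    (hg : AnalyticOnNhd ℂ g (closure U))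
    (hf : IsAdmissible (fun x => Function.update (k x) i (g x * h x)) U 0) :
    IsAdmissible (fun x => Function.update (k x) i (g x)) U 0 := by
  refine ⟨hf.isOpen, hf.isBounded, fun x hx => analyticAt_update (hk x hx) (hg x hx),
    fun x hx h0 => hf.ne_of_mem_frontier x hx ?_⟩
  rw [update_eq_zero_iff] at h0 ⊢
  exact ⟨by rw [h0.1, zero_mul], h0.2⟩

theorem degree_update_mul_of_isRegularValue (hk : AnalyticOnNhd ℂ k (closure U))
    (hg : AnalyticOnNhd ℂ g (closure U)) (hh : AnalyticOnNhd ℂ h (closure U))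
    (hf : IsAdmissible (fun x => Function.update (k x) i (g x * h x)) U 0)
    (hgreg : IsRegularValue (fun x => Function.update (k x) i (g x)) U 0)
    (hhreg : IsRegularValue (fun x => Function.update (k x) i (h x)) U 0)
    (hdisj : Disjoint (U ∩ (fun x => Function.update (k x) i (g x)) ⁻¹' {0})
      (U ∩ (fun x => Function.update (k x) i (h x)) ⁻¹' {0})) :
    degree (fun x => Function.update (k x) i (g x * h x)) U 0 =
      (U ∩ (fun x => Function.update (k x) i (g x)) ⁻¹' {0}).ncard +
        (U ∩ (fun x => Function.update (k x) i (h x)) ⁻¹' {0}).ncard := by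
  have hcomm : (fun x => Function.update (k x) i (g x * h x)) =
      fun x => Function.update (k x) i (h x * g x) := by simp only [mul_comm]
  have hgadm := hf.of_update_mul hk hg
  have hhadm := (hcomm ▸ hf).of_update_mul hk hh
  rw [← ncard_union_eq hdisj (hgadm.finite_fiber hgreg) (hhadm.finite_fiber hhreg),
    ← fiber_update_mul]
  refine (hf.ncard_fiber_eq_degree fun x hxU hx => ?_).symm
  have hxc := subset_closure hxU
  rcases fiber_update_mul.subset ⟨hxU, hx⟩ with hx' | hx'
  · refine bijective_fderiv_update_mul (hgadm.analyticOnNhd x hxc).differentiableAt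
      (hh x hxc).differentiableAt (fun h0 => ?_) hx'.2 (hgreg x hxU hx'.2)
    exact disjoint_left.1 hdisj hx' ⟨hxU, update_eq_zero_iff.2 ⟨h0, (update_eq_zero_iff.1 hx).2⟩⟩
  · rw [hcomm]
    refine bijective_fderiv_update_mul (hhadm.analyticOnNhd x hxc).differentiableAt
      (hg x hxc).differentiableAt (fun h0 => ?_) hx'.2 (hhreg x hxU hx'.2)
    exact disjoint_right.1 hdisj hx' ⟨hxU, update_eq_zero_iff.2 ⟨h0, (update_eq_zero_iff.1 hx).2⟩⟩

theorem degree_update_mul_sub {q : ι → ℂ} {s : ℂ} (hk : AnalyticOnNhd ℂ k (closure U))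
    (hg : AnalyticOnNhd ℂ g (closure U)) (hh : AnalyticOnNhd ℂ h (closure U))
    (hf : IsAdmissible (fun x => Function.update (k x - q) i ((g x - q i) * (h x - s))) U 0)
    (hgreg : IsRegularValue (fun x => Function.update (k x) i (g x)) U q)
    (hhreg : IsRegularValue (fun x => Function.update (k x) i (h x)) U (Function.update q i s))
    (hdisj : ∀ x ∈ U ∩ (fun x => Function.update (k x) i (g x)) ⁻¹' {q}, h x ≠ s) :
    degree (fun x => Function.update (k x - q) i ((g x - q i) * (h x - s))) U 0 =
      (U ∩ (fun x => Function.update (k x) i (g x)) ⁻¹' {q}).ncard +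
        (U ∩ (fun x => Function.update (k x) i (h x)) ⁻¹' {Function.update q i s}).ncard := by
  have hG : (fun x => Function.update (k x - q) i (g x - q i)) =
      fun x => Function.update (k x) i (g x) - q := by
    simp only [← update_sub_update, Function.update_eq_self]
  have hH : (fun x => Function.update (k x - q) i (h x - s)) =
      fun x => Function.update (k x) i (h x) - Function.update q i s := by
    simp only [update_sub_update]
  have hfiberG := preimage_sub_const (fun x => Function.update (k x) i (g x)) q
  have hfiberH := preimage_sub_const (fun x => Function.update (k x) i (h x))
    (Function.update q i s)
  rw [degree_update_mul_of_isRegularValue (k := fun x => k x - q) (g := fun x => g x - q i)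
    (h := fun x => h x - s) (hk.sub analyticOnNhd_const) (hg.sub analyticOnNhd_const)
    (hh.sub analyticOnNhd_const) hf, hG, hH, hfiberG, hfiberH]
  · rw [hG]
    exact isRegularValue_sub_const.2 hgreg
  · rw [hH]
    exact isRegularValue_sub_const.2 hhreg
  · rw [hG, hH, hfiberG, hfiberH]
    refine disjoint_left.2 fun x hx hx' => hdisj x hx ?_
    simpa only [Function.update_self] using congrFun hx'.2 i

theorem IsAdmissible.eventually_degree_update_mul_sub (hk : AnalyticOnNhd ℂ k (closure U))
    (hg : AnalyticOnNhd ℂ g (closure U)) (hh : AnalyticOnNhd ℂ h (closure U))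
    (hf : IsAdmissible (fun x => Function.update (k x) i (g x * h x)) U 0) :
    ∀ᶠ t in 𝓝 (0 : (ι → ℂ) × ℂ),
      IsAdmissible (fun x => Function.update (k x - t.1) i ((g x - t.1 i) * (h x - t.2))) U 0 ∧
        degree (fun x => Function.update (k x - t.1) i ((g x - t.1 i) * (h x - t.2))) U 0 =
          degree (fun x => Function.update (k x) i (g x * h x)) U 0 := by
  let F : (ι → ℂ) × ℂ → (ι → ℂ) → ι → ℂ := fun t x =>
    Function.update (k x - t.1) i ((g x - t.1 i) * (h x - t.2))
  have hF0 : F 0 = fun x => Function.update (k x) i (g x * h x) := by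
    simp only [F, Prod.fst_zero, Prod.snd_zero, sub_zero, Pi.zero_apply]
  rw [← hF0] at hf ⊢
  refine hf.eventually_degree_family_eq fun x hx => ?_
  have hk' : AnalyticAt ℂ (fun p : ((ι → ℂ) × ℂ) × (ι → ℂ) => k p.2) (0, x) :=
    (hk x hx).comp_of_eq analyticAt_snd rfl
  have hg' : AnalyticAt ℂ (fun p : ((ι → ℂ) × ℂ) × (ι → ℂ) => g p.2) (0, x) :=
    (hg x hx).comp_of_eq analyticAt_snd rfl
  have hh' : AnalyticAt ℂ (fun p : ((ι → ℂ) × ℂ) × (ι → ℂ) => h p.2) (0, x) :=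
    (hh x hx).comp_of_eq analyticAt_snd rfl
  have hq : AnalyticAt ℂ (fun p : ((ι → ℂ) × ℂ) × (ι → ℂ) => p.1.1) (0, x) :=
    analyticAt_fst.comp analyticAt_fst
  have hs : AnalyticAt ℂ (fun p : ((ι → ℂ) × ℂ) × (ι → ℂ) => p.1.2) (0, x) :=
    analyticAt_snd.comp analyticAt_fst
  exact analyticAt_update (hk'.sub hq) ((hg'.sub (analyticAt_pi_iff.1 hq i)).mul (hh'.sub hs))

theorem degree_update_mul (hk : AnalyticOnNhd ℂ k (closure U))
    (hg : AnalyticOnNhd ℂ g (closure U)) (hh : AnalyticOnNhd ℂ h (closure U))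
    (hf : IsAdmissible (fun x => Function.update (k x) i (g x * h x)) U 0) :
    degree (fun x => Function.update (k x) i (g x * h x)) U 0 =
      degree (fun x => Function.update (k x) i (g x)) U 0 +
        degree (fun x => Function.update (k x) i (h x)) U 0 := by
  have hgadm := hf.of_update_mul hk hg
  have hhadm := IsAdmissible.of_update_mul (g := h) (h := g) hk hh
    (by simpa only [mul_comm] using hf)
  have hshift (q : ι → ℂ) : Tendsto (fun t : (ι → ℂ) × ℂ => Function.update t.1 i t.2)
      (𝓝 (q, q i)) (𝓝 q) :=
    Continuous.tendsto' (by fun_prop) _ _ (Function.update_eq_self i q)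
  have hnear := ((hf.eventually_degree_update_mul_sub hk hg hh).and
    ((hshift 0).eventually hhadm.eventually_ncard_fiber_eq_degree)).eventually_nhds
  have hdiag : Tendsto (fun q : ι → ℂ => (q, q i)) (𝓝 0) (𝓝 0) :=
    Continuous.tendsto' (by fun_prop) _ _ rfl
  obtain ⟨q, ⟨hq, hgcount⟩, ⟨hgadm_q, hgreg⟩, hhadm_q, hhreg⟩ :=
    hgadm.exists_isRegularValue_and hhadm
      ((hdiag.eventually hnear).and hgadm.eventually_ncard_fiber_eq_degree)
  have hslice : Tendsto (fun s => (q, s)) (𝓝 (q i)) (𝓝 (q, q i)) :=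
    Continuous.tendsto (by fun_prop) _
  have hdisj : ∀ᶠ s in 𝓝[≠] (q i),
      ∀ x ∈ U ∩ (fun x => Function.update (k x) i (g x)) ⁻¹' {q}, h x ≠ s :=
    (eventually_all_finite (hgadm_q.finite_fiber hgreg)).2 fun x _ =>
      nhdsNE_le_cofinite _ ((finite_singleton (h x)).subset fun _ hs => (not_not.1 hs).symm)
  have hhreg_near := ((hshift q).comp hslice).eventually (hhadm_q.eventually_isRegularValue hhreg)
  obtain ⟨s, ⟨⟨⟨hadm, hdeg⟩, hhcount⟩, hhreg_s⟩, hs⟩ :=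
    ((((hslice.eventually hq).and hhreg_near).filter_mono nhdsWithin_le_nhds).and hdisj).exists
  rw [← hdeg, degree_update_mul_sub hk hg hh hadm hgreg hhreg_s hs, hgcount hgreg,
    hhcount hhreg_s]

end Products

section Powers

variable {ι : Type*} [Fintype ι]

theorem degree_update_pow {U : Set (ι → ℂ)} {k : (ι → ℂ) → ι → ℂ} {i : ι} {g : (ι → ℂ) → ℂ}
    (hk : AnalyticOnNhd ℂ k (closure U)) (hg : AnalyticOnNhd ℂ g (closure U)) (p : ℕ)
    (hf : IsAdmissible (fun x => Function.update (k x) i (g x ^ p)) U 0) :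
    degree (fun x => Function.update (k x) i (g x ^ p)) U 0 =
      p * degree (fun x => Function.update (k x) i (g x)) U 0 := by
  induction p with
  | zero =>
    have hne (x : ι → ℂ) : Function.update (k x) i (g x ^ 0) ≠ 0 := fun hx =>
      one_ne_zero ((pow_zero (g x)).symm.trans (update_eq_zero_iff.1 hx).1)
    have hempty : U ∩ (fun x => Function.update (k x) i (g x ^ 0)) ⁻¹' {0} = ∅ :=
      eq_empty_of_forall_notMem fun x hx => hne x hx.2
    rw [zero_mul, ← hf.ncard_fiber_eq_degree fun x _ hx => (hne x hx).elim, hempty, ncard_empty]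
  | succ p ih =>
    simp only [pow_succ] at hf ⊢
    have hgp : AnalyticOnNhd ℂ (fun x => g x ^ p) (closure U) := hg.pow p
    rw [degree_update_mul hk hgp hg hf, ih (hf.of_update_mul hk hgp), add_one_mul]

theorem isAdmissible_ball {E : Type*} [NormedAddCommGroup E] [NormedSpace ℂ E] {h : E → E} {R : ℝ}
    (hR : 0 < R) (ha : AnalyticOnNhd ℂ h (closedBall 0 R))
    (hz : ∀ x ∈ closedBall 0 R, h x = 0 → x = 0) : IsAdmissible h (ball 0 R) 0 := by
  refine ⟨isOpen_ball, isBounded_ball, closure_ball (0 : E) hR.ne' ▸ ha, fun x hx hx0 => ?_⟩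
  rw [frontier_ball (0 : E) hR.ne', mem_sphere_zero_iff_norm] at hx
  have hx' := hz x (mem_closedBall_zero_iff.2 hx.le) hx0
  exact hR.ne' (by rw [← hx, hx', norm_zero])

theorem degree_id_ball {E : Type*} [NormedAddCommGroup E] [NormedSpace ℂ E]
    [FiniteDimensional ℂ E] {R : ℝ} (hR : 0 < R) :
    degree (fun x : E => x) (ball 0 R) 0 = 1 := by
  have hadm : IsAdmissible (fun x : E => x) (ball 0 R) 0 :=
    isAdmissible_ball hR analyticOnNhd_id fun _ _ hx => hx
  have hreg : IsRegularValue (fun x : E => x) (ball 0 R) 0 := fun x _ _ => by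
    rw [fderiv_fun_id]
    exact Function.bijective_id
  rw [← hadm.ncard_fiber_eq_degree hreg, ncard_eq_one]
  refine ⟨0, eq_singleton_iff_unique_mem.2 ⟨⟨mem_ball_self hR, rfl⟩, fun x hx => hx.2⟩⟩

theorem analyticAt_apply (j : ι) (x : ι → ℂ) : AnalyticAt ℂ (fun y : ι → ℂ => y j) x :=
  analyticAt_pi_iff.1 analyticAt_id j

theorem isAdmissible_piecewise_pow {R : ℝ} (hR : 0 < R) {p : ι → ℕ} (hp : ∀ j, p j ≠ 0)
    (s : Finset ι) :
    IsAdmissible (fun x : ι → ℂ => s.piecewise (fun j => x j ^ p j) x) (ball 0 R) 0 := by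
  refine isAdmissible_ball hR (fun x _ => analyticAt_pi_iff.2 fun j => ?_)
    fun x _ hx => funext fun j => ?_
  · by_cases hj : j ∈ s
    · simp only [Finset.piecewise_eq_of_mem _ _ _ hj]
      exact (analyticAt_apply j x).pow (p j)
    · simp only [Finset.piecewise_eq_of_notMem _ _ _ hj]
      exact analyticAt_apply j x
  · have hxj := congrFun hx j
    by_cases hj : j ∈ s
    · rw [Finset.piecewise_eq_of_mem _ _ _ hj] at hxj
      exact pow_eq_zero_iff (hp j) |>.1 hxj
    · rwa [Finset.piecewise_eq_of_notMem _ _ _ hj] at hxj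

theorem degree_piecewise_pow {R : ℝ} (hR : 0 < R) {p : ι → ℕ} (hp : ∀ j, p j ≠ 0)
    (s : Finset ι) :
    degree (fun x : ι → ℂ => s.piecewise (fun j => x j ^ p j) x) (ball 0 R) 0 = ∏ j ∈ s, p j := by
  induction s using Finset.induction_on with
  | empty => simpa only [Finset.piecewise_empty, Finset.prod_empty] using degree_id_ball hR
  | insert j s hj ih =>
    have hadm := isAdmissible_piecewise_pow hR hp (insert j s)
    have hs (x : ι → ℂ) : Function.update (s.piecewise (fun j => x j ^ p j) x) j (x j) =
        s.piecewise (fun j => x j ^ p j) x :=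
      Function.update_eq_iff.2 ⟨(Finset.piecewise_eq_of_notMem _ _ _ hj).symm, fun _ _ => rfl⟩
    simp only [Finset.piecewise_insert] at hadm ⊢
    rw [degree_update_pow (isAdmissible_piecewise_pow hR hp s).analyticOnNhd
      (fun x _ => analyticAt_apply j x) _ hadm, Finset.prod_insert hj]
    simp only [hs, ih]

theorem degree_pow {R : ℝ} (hR : 0 < R) {p : ι → ℕ} (hp : ∀ j, p j ≠ 0) :
    degree (fun (x : ι → ℂ) j => x j ^ p j) (ball 0 R) 0 = ∏ j, p j := by
  simpa only [Finset.piecewise_univ] using degree_piecewise_pow hR hp Finset.univ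

theorem prod_le_degree_mulVec_pow {R : ℝ} (hR : 0 < R) (p : ι → ℕ)
    {M : (ι → ℂ) → Matrix ι ι ℂ} (hM : ∀ i j, AnalyticOnNhd ℂ (fun x => M x i j) (closedBall 0 R))
    (hadm : IsAdmissible (fun x => M x *ᵥ fun j => x j ^ p j) (ball 0 R) 0) :
    ∏ j, p j ≤ degree (fun x => M x *ᵥ fun j => x j ^ p j) (ball 0 R) 0 := by
  by_cases hp : ∀ j, p j ≠ 0
  · rw [← degree_pow hR hp]
    rw [← closure_ball (0 : ι → ℂ) hR.ne'] at hM
    exact degree_le_degree_mulVec hM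
      (fun x _ => AnalyticAt.pi fun j => (analyticAt_apply j x).pow (p j)) hadm
  · obtain ⟨j, hj⟩ := not_forall_not.1 hp
    exact (Finset.prod_eq_zero (Finset.mem_univ j) hj).trans_le (Nat.zero_le _)

end Powers

section ZeroOrder

theorem IsAdmissible.subset {E : Type*} [NormedAddCommGroup E] [NormedSpace ℂ E] {h : E → E}
    {U V : Set E} {q : E} (hq : IsAdmissible h U q) (hV : IsOpen V) (hVU : V ⊆ U)
    (hfiber : U ∩ h ⁻¹' {q} ⊆ V) : IsAdmissible h V q := by
  refine ⟨hV, hq.isBounded.subset hVU, hq.analyticOnNhd.mono (closure_mono hVU), fun x hx hxq => ?_⟩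
  have hxU : x ∈ U := hq.mem_of_mem_closure (closure_mono hVU (frontier_subset_closure hx)) hxq
  exact (hV.frontier_eq ▸ hx).2 (hfiber ⟨hxU, hxq⟩)

theorem IsAdmissible.degree_subset {E : Type*} [NormedAddCommGroup E] [NormedSpace ℂ E]
    [FiniteDimensional ℂ E] {h : E → E} {U V : Set E} {q : E} (hq : IsAdmissible h U q)
    (hV : IsOpen V) (hVU : V ⊆ U) (hfiber : U ∩ h ⁻¹' {q} ⊆ V) : degree h V q = degree h U q := by
  refine (hq.subset hV hVU hfiber).degree_eq ?_
  filter_upwards [hq.eventually_fiber_subset hV hfiber, hq.eventually_ncard_fiber_eq_degree]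
    with y hyV hy hreg
  have heq : V ∩ h ⁻¹' {y} = U ∩ h ⁻¹' {y} :=
    (inter_subset_inter_left _ hVU).antisymm fun x hx => ⟨hyV hx, hx.2⟩
  rw [heq, hy fun x hx hxy => hreg x (hyV ⟨hx, hxy⟩) hxy]

theorem degree_congr {E : Type*} [NormedAddCommGroup E] [NormedSpace ℂ E] {f g : E → E} {U : Set E}
    (hU : IsOpen U) (hfg : EqOn f g U) (q : E) : degree f U q = degree g U q := by
  have hfiber (y : E) : U ∩ f ⁻¹' {y} = U ∩ g ⁻¹' {y} := by
    ext x
    exact and_congr_right fun hx => by rw [mem_preimage, mem_preimage, hfg hx]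
  have hreg (y : E) : IsRegularValue f U y ↔ IsRegularValue g U y :=
    forall₂_congr fun x hx => by
      rw [hfg hx, (hfg.eventuallyEq_of_mem (hU.mem_nhds hx)).fderiv_eq]
  simp only [degree, hfiber, hreg]

variable {f : Cn n → Cn n} {R : ℝ}

theorem hasZeroOrder_degree (hR : 0 < R) (ha : AnalyticOnNhd ℂ f (closedBall 0 R)) (h0 : f 0 = 0)
    (hz : ∀ x ∈ closedBall 0 R, f x = 0 → x = 0) :
    HasZeroOrder f 0 (degree f (ball 0 R) 0) := by
  have hadm := isAdmissible_ball hR ha hz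
  refine ⟨R, hR, ha, h0, hz, fun ε hε => ?_, ?_⟩
  · obtain ⟨q, hq, -, hreg⟩ := hadm.exists_isRegularValue (ball_mem_nhds (0 : Cn n) hε)
    exact ⟨q, mem_ball_zero_iff.1 hq, hreg⟩
  · obtain ⟨δ, hδ, hcount⟩ :=
      Metric.eventually_nhds_iff_ball.1 hadm.eventually_ncard_fiber_eq_degree
    exact ⟨δ, hδ, fun q hq hreg => hcount q (mem_ball_zero_iff.2 hq) hreg⟩

theorem HasZeroOrder.eq_degree {m : ℕ} (hm : HasZeroOrder f 0 m) (hR : 0 < R)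
    (ha : AnalyticOnNhd ℂ f (closedBall 0 R)) (hz : ∀ x ∈ closedBall 0 R, f x = 0 → x = 0) :
    m = degree f (ball 0 R) 0 := by
  obtain ⟨r, hr, hra, -, hrz, -, δ, hδ, hcount⟩ := hm
  have hfiber {s : ℝ} (hsz : ∀ x ∈ closedBall 0 s, f x = 0 → x = 0) :
      ball 0 s ∩ f ⁻¹' {0} ⊆ ball 0 (min r R) := fun x hx => by
    rw [hsz x (ball_subset_closedBall hx.1) hx.2]
    exact mem_ball_self (lt_min hr hR)
  have hradm := isAdmissible_ball hr hra hrz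
  rw [← (isAdmissible_ball hR ha hz).degree_subset isOpen_ball
    (ball_subset_ball (min_le_right r R)) (hfiber hz), hradm.degree_subset isOpen_ball
    (ball_subset_ball (min_le_left r R)) (hfiber hrz)]
  exact (hradm.degree_eq (Metric.eventually_nhds_iff_ball.2
    ⟨δ, hδ, fun q hq hreg => hcount q (mem_ball_zero_iff.1 hq) hreg⟩)).symm

theorem zeroOrder_eq_degree (hR : 0 < R) (ha : AnalyticOnNhd ℂ f (closedBall 0 R)) (h0 : f 0 = 0)
    (hz : ∀ x ∈ closedBall 0 R, f x = 0 → x = 0) : zeroOrder f 0 = degree f (ball 0 R) 0 :=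
  (Nat.sInf_mem (s := {m | HasZeroOrder f 0 m})
    ⟨_, hasZeroOrder_degree hR ha h0 hz⟩).eq_degree hR ha hz

theorem exists_zeroOrder_eq_degree {F : Cn n → Cn n} {P : Cn n → Prop} (hiso : IsolatedZeroAt0 f)
    (hF : AnalyticAt ℂ F 0) (hfF : f =ᶠ[𝓝 0] F) (hP : ∀ᶠ x in 𝓝 0, P x) :
    ∃ R > 0, (∀ x ∈ closedBall 0 R, P x) ∧ IsAdmissible F (ball 0 R) 0 ∧
      zeroOrder f 0 = degree F (ball 0 R) 0 := by
  have hiso' : ∀ᶠ x in 𝓝 0, f x = 0 → x = 0 :=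
    (eventually_nhdsWithin_iff.1 hiso.2).mono fun x hx hx0 => not_imp_comm.1 hx (not_not.2 hx0)
  obtain ⟨R, hR, hball⟩ := nhds_basis_closedBall.eventually_iff.1
    ((hP.and hiso').and (hF.eventually_analyticAt.and hfF.eventually_nhds))
  have heq : ∀ x ∈ closedBall 0 R, f =ᶠ[𝓝 x] F := fun x hx => (hball hx).2.2
  refine ⟨R, hR, fun x hx => (hball hx).1.1, isAdmissible_ball hR (fun x hx => (hball hx).2.1)
    fun x hx hx0 => (hball hx).1.2 ((heq x hx).eq_of_nhds.trans hx0), ?_⟩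
  rw [← degree_congr isOpen_ball fun x hx => (heq x (ball_subset_closedBall hx)).eq_of_nhds]
  exact zeroOrder_eq_degree hR (fun x hx => (hball hx).2.1.congr (heq x hx).symm) hiso.1
    fun x hx => (hball hx).1.2

end ZeroOrder

section Planar

variable {U : Set (Fin 2 → ℂ)} {a b g h : (Fin 2 → ℂ) → ℂ}

theorem analyticOnNhd_vec2 {S : Set (Fin 2 → ℂ)} (ha : AnalyticOnNhd ℂ a S)
    (hb : AnalyticOnNhd ℂ b S) : AnalyticOnNhd ℂ (fun x => ![a x, b x]) S := fun x hx =>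
  analyticAt_pi_iff.2 (Fin.forall_fin_two.2 ⟨ha x hx, hb x hx⟩)

theorem IsAdmissible.vec2_mul_left (hf : IsAdmissible (fun x => ![g x * h x, b x]) U 0)
    (hb : AnalyticOnNhd ℂ b (closure U))
    (hg : AnalyticOnNhd ℂ g (closure U)) (hh : AnalyticOnNhd ℂ h (closure U)) :
    IsAdmissible (fun x => ![g x, b x]) U 0 ∧ IsAdmissible (fun x => ![h x, b x]) U 0 ∧
      degree (fun x => ![g x * h x, b x]) U 0 =
        degree (fun x => ![g x, b x]) U 0 + degree (fun x => ![h x, b x]) U 0 := by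
  have hupd (c : (Fin 2 → ℂ) → ℂ) :
      (fun x => ![c x, b x]) = fun x => Function.update ![0, b x] 0 (c x) :=
    funext fun x => (Fin.update_cons_zero (α := fun _ => ℂ) 0 ![b x] (c x)).symm
  have hk := analyticOnNhd_vec2 (analyticOnNhd_const (v := 0)) hb
  have hcomm : IsAdmissible (fun x => ![h x * g x, b x]) U 0 := by simpa only [mul_comm] using hf
  simp only [hupd] at hf hcomm ⊢
  exact ⟨hf.of_update_mul hk hg, hcomm.of_update_mul hk hh, degree_update_mul hk hg hh hf⟩

theorem IsAdmissible.vec2_mul_right (hf : IsAdmissible (fun x => ![a x, g x * h x]) U 0)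
    (ha : AnalyticOnNhd ℂ a (closure U))
    (hg : AnalyticOnNhd ℂ g (closure U)) (hh : AnalyticOnNhd ℂ h (closure U)) :
    IsAdmissible (fun x => ![a x, g x]) U 0 ∧ IsAdmissible (fun x => ![a x, h x]) U 0 ∧
      degree (fun x => ![a x, g x * h x]) U 0 =
        degree (fun x => ![a x, g x]) U 0 + degree (fun x => ![a x, h x]) U 0 := by
  have hupd (c : (Fin 2 → ℂ) → ℂ) :
      (fun x => ![a x, c x]) = fun x => Function.update ![a x, 0] 1 (c x) :=
    funext fun x => funext (Fin.forall_fin_two.2 ⟨rfl, rfl⟩)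
  have hk := analyticOnNhd_vec2 ha (analyticOnNhd_const (v := 0))
  have hcomm : IsAdmissible (fun x => ![a x, h x * g x]) U 0 := by simpa only [mul_comm] using hf
  simp only [hupd] at hf hcomm ⊢
  exact ⟨hf.of_update_mul hk hg, hcomm.of_update_mul hk hh, degree_update_mul hk hg hh hf⟩

theorem mul_le_degree_vec2 {R : ℝ} (hR : 0 < R) (p₁ p₂ : ℕ) {c₁₁ c₁₂ c₂₁ c₂₂ : (Fin 2 → ℂ) → ℂ}
    (h₁₁ : AnalyticOnNhd ℂ c₁₁ (closedBall 0 R)) (h₁₂ : AnalyticOnNhd ℂ c₁₂ (closedBall 0 R))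
    (h₂₁ : AnalyticOnNhd ℂ c₂₁ (closedBall 0 R)) (h₂₂ : AnalyticOnNhd ℂ c₂₂ (closedBall 0 R))
    (hadm : IsAdmissible (fun x => ![a x, b x]) (ball 0 R) 0)
    (ha : ∀ x, a x = c₁₁ x * x 0 ^ p₁ + c₁₂ x * x 1 ^ p₂)
    (hb : ∀ x, b x = c₂₁ x * x 0 ^ p₁ + c₂₂ x * x 1 ^ p₂) :
    p₁ * p₂ ≤ degree (fun x => ![a x, b x]) (ball 0 R) 0 := by
  have hmul : (fun x => ![a x, b x]) =
      fun x => !![c₁₁ x, c₁₂ x; c₂₁ x, c₂₂ x] *ᵥ fun j => x j ^ ![p₁, p₂] j := by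
    funext x
    rw [ha, hb]
    ext j
    fin_cases j <;> simp [Matrix.mulVec, dotProduct, Fin.sum_univ_two]
  rw [hmul] at hadm ⊢
  have hprod : p₁ * p₂ = ∏ j, ![p₁, p₂] j := by simp [Fin.prod_univ_two]
  rw [hprod]
  refine prod_le_degree_mulVec_pow hR _ (fun i j => ?_) hadm
  fin_cases i <;> fin_cases j
  exacts [h₁₁, h₁₂, h₂₁, h₂₂]

theorem le_degree_factored_system {R : ℝ} (hR : 0 < R) {n₁ n₂ m₁ m₂ : ℕ} (h₁ : n₁ ≤ m₁)
    (h₂ : n₂ ≤ m₂) {v₁ v₂ w₁ w₂ : (Fin 2 → ℂ) → ℂ} (hv₁ : AnalyticOnNhd ℂ v₁ (closedBall 0 R))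
    (hv₂ : AnalyticOnNhd ℂ v₂ (closedBall 0 R)) (hw₁ : AnalyticOnNhd ℂ w₁ (closedBall 0 R))
    (hw₂ : AnalyticOnNhd ℂ w₂ (closedBall 0 R))
    (hadm : IsAdmissible (fun x => ![x 0 ^ n₁ * (x 0 ^ m₁ * v₁ x + x 1 ^ n₂ * w₁ x),
      x 1 ^ n₂ * (x 0 ^ n₁ * v₂ x + x 1 ^ m₂ * w₂ x)]) (ball 0 R) 0) :
    2 * n₁ * n₂ + n₁ * m₂ + m₁ * n₂ ≤
      degree (fun x => ![x 0 ^ n₁ * (x 0 ^ m₁ * v₁ x + x 1 ^ n₂ * w₁ x),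
        x 1 ^ n₂ * (x 0 ^ n₁ * v₂ x + x 1 ^ m₂ * w₂ x)]) (ball 0 R) 0 := by
  have hX (j : Fin 2) (m : ℕ) :
      AnalyticOnNhd ℂ (fun x : Fin 2 → ℂ => x j ^ m) (closedBall 0 R) :=
    fun x _ => (analyticAt_apply j x).pow m
  have hg₁ := ((hX 0 m₁).mul hv₁).add ((hX 1 n₂).mul hw₁)
  have hg₂ := ((hX 0 n₁).mul hv₂).add ((hX 1 m₂).mul hw₂)
  have hconst (c : ℂ) : AnalyticOnNhd ℂ (fun _ : Fin 2 → ℂ => c) (closedBall 0 R) :=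
    analyticOnNhd_const
  have hcl := closure_ball (0 : Fin 2 → ℂ) hR.ne'
  obtain ⟨hadmX, hadmG, hdeg⟩ :=
    hadm.vec2_mul_left (hcl ▸ (hX 1 n₂).mul hg₂) (hcl ▸ hX 0 n₁) (hcl ▸ hg₁)
  obtain ⟨hXY, hXG, hdegX⟩ := hadmX.vec2_mul_right (hcl ▸ hX 0 n₁) (hcl ▸ hX 1 n₂) (hcl ▸ hg₂)
  obtain ⟨hGY, hGG, hdegG⟩ := hadmG.vec2_mul_right (hcl ▸ hg₁) (hcl ▸ hX 1 n₂) (hcl ▸ hg₂)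
  have hXY_le := mul_le_degree_vec2 hR n₁ n₂ (hconst 1) (hconst 0) (hconst 0) (hconst 1) hXY
    (fun x => by ring) (fun x => by ring)
  have hXG_le := mul_le_degree_vec2 hR n₁ m₂ (hconst 1) (hconst 0) hv₂ hw₂ hXG
    (fun x => by ring) (fun x => by ring)
  have hGY_le := mul_le_degree_vec2 hR m₁ n₂ hv₁ hw₁ (hconst 0) (hconst 1) hGY
    (fun x => by ring) (fun x => by ring)
  have hGG_le := mul_le_degree_vec2 hR n₁ n₂ ((hX 0 (m₁ - n₁)).mul hv₁) hw₁ hv₂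
    ((hX 1 (m₂ - n₂)).mul hw₂) hGG
    (fun x => by rw [← pow_mul_pow_sub (x 0) h₁]; ring)
    (fun x => by rw [← pow_mul_pow_sub (x 1) h₂]; ring)
  linarith

end Planar

theorem zeroOrder_corollary_five_general {n₁ n₂ m₁ m₂ : ℕ} (h₁ : n₁ ≤ m₁) (h₂ : n₂ ≤ m₂)
    {f : Cn 2 → Cn 2} {v₁ v₂ w₁ w₂ : Cn 2 → ℂ}
    (hv₁ : AnalyticAt ℂ v₁ 0) (hv₂ : AnalyticAt ℂ v₂ 0)
    (hw₁ : AnalyticAt ℂ w₁ 0) (hw₂ : AnalyticAt ℂ w₂ 0)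
    (hform : ∀ᶠ x in 𝓝 (0 : Cn 2),
      f x = ![x 0 ^ n₁ * (x 0 ^ m₁ * v₁ x + x 1 ^ n₂ * w₁ x),
              x 1 ^ n₂ * (x 0 ^ n₁ * v₂ x + x 1 ^ m₂ * w₂ x)])
    (hiso : IsolatedZeroAt0 f) :
    2 * n₁ * n₂ + n₁ * m₂ + m₁ * n₂ ≤ zeroOrder f 0 := by
  have hX (j : Fin 2) (m : ℕ) : AnalyticAt ℂ (fun x : Cn 2 => x j ^ m) 0 :=
    (analyticAt_apply j 0).pow m
  have hF : AnalyticAt ℂ (fun x : Cn 2 =>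
      ![x 0 ^ n₁ * (x 0 ^ m₁ * v₁ x + x 1 ^ n₂ * w₁ x),
        x 1 ^ n₂ * (x 0 ^ n₁ * v₂ x + x 1 ^ m₂ * w₂ x)]) 0 :=
    analyticAt_pi_iff.2 (Fin.forall_fin_two.2
      ⟨(hX 0 n₁).mul (((hX 0 m₁).mul hv₁).add ((hX 1 n₂).mul hw₁)),
        (hX 1 n₂).mul (((hX 0 n₁).mul hv₂).add ((hX 1 m₂).mul hw₂))⟩)
  obtain ⟨R, hR, hcoeff, hadm, hdegree⟩ := exists_zeroOrder_eq_degree hiso hF hform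
    ((hv₁.eventually_analyticAt.and hv₂.eventually_analyticAt).and
      (hw₁.eventually_analyticAt.and hw₂.eventually_analyticAt))
  rw [hdegree]
  exact le_degree_factored_system hR h₁ h₂ (fun x hx => (hcoeff x hx).1.1)
    (fun x hx => (hcoeff x hx).1.2) (fun x hx => (hcoeff x hx).2.1)
    (fun x hx => (hcoeff x hx).2.2) hadm

/-- Cronin-type estimate: if `f₁ = x₁^{n₁}[x₁^{r n₁}·O(1) + x₂^{n₂}·O(1)]` and
`f₂ = x₂^{n₂}[x₁^{n₁}·O(1) + x₂^{r n₂}·O(1)]`, and `0` is an isolated zero of `f`,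
then `π_f(0) ≥ 2 n₁ n₂ + 2 r n₁ n₂`. -/
theorem zeroOrder_corollary_five (r n₁ n₂ : ℕ) (hr : 0 < r) (hn₁ : 0 < n₁)
    (hn₂ : 0 < n₂) (f : Cn 2 → Cn 2) (v₁ v₂ w₁ w₂ : Cn 2 → ℂ)
    (hv₁ : AnalyticAt ℂ v₁ 0) (hv₂ : AnalyticAt ℂ v₂ 0)
    (hw₁ : AnalyticAt ℂ w₁ 0) (hw₂ : AnalyticAt ℂ w₂ 0)
    (hform : ∀ᶠ x in 𝓝 (0 : Cn 2),
      f x = ![x 0 ^ n₁ * (x 0 ^ (r * n₁) * v₁ x + x 1 ^ n₂ * w₁ x),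
              x 1 ^ n₂ * (x 0 ^ n₁ * v₂ x + x 1 ^ (r * n₂) * w₂ x)])
    (hiso : IsolatedZeroAt0 f) :
    2 * n₁ * n₂ + 2 * r * n₁ * n₂ ≤ zeroOrder f 0 := by
  linarith [zeroOrder_corollary_five_general (Nat.le_mul_of_pos_left n₁ hr)
    (Nat.le_mul_of_pos_left n₂ hr) hv₁ hv₂ hw₁ hw₂ hform hiso]

end ZhangPaper
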